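/- arXiv:1203.5116 — 6 statements merged into one kernel-verified Lean document; each statement's English description precedes it below -/
import Mathlib

section
/- Let γ_{AB} be a pure n-mode covariance matrix (i.e., a 2n×2n real symmetric matrix with γ_{AB} + iΩ positive semidefinite and det γ_{AB} = 1), partitioned into modes A and B, with γ_A the diagonal block of subsystem A. Then the Gaussian Rényi-2 entanglement E₂(γ_{A:B}) = inf{ (1/2) ln det σ_A : σ real symmetric 2n×2n, σ + iΩ positive semidefinite, det σ = 1, σ ≤ γ_{AB} in the Loewner order } equals (1/2) ln det γ_A; i.e., for pure Gaussian states the infimum is saturated by σ = γ_{AB} and E₂ reduces to the Rényi-2 entropy of the reduced state of subsystem A. -/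
/-!
For a pure covariance matrix `γ` the infimum defining `E2 γ` ranges over a single matrix, `γ` itself.
A competitor `σ` is positive semidefinite, being the real part of `σ + iΩ ⪰ 0`, and invertible since
`det σ = 1`, so `σ = Bᵀ B` with `B` invertible. Conjugating by `B⁻¹` turns `σ ≤ γ` and
`det γ = det σ` into `det (1 + M) = 1` with `M ⪰ 0`. As `det (1 + M) = ∏ (1 + λᵢ) ≥ 1 + tr M`, this
forces `tr M = 0`, hence `M = 0` and `σ = γ` (`eq_of_posSemidef_sub_of_det_eq`).
-/

open Matrix
open scoped ComplexOrder

/-- The standard symplectic form `Ω = ⊕ₖ [[0,1],[−1,0]]` on a phase space with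
modes indexed by `ι`; each mode carries a pair of canonical quadratures,
indexed by `Fin 2`. -/
def symplecticForm (ι : Type*) [DecidableEq ι] :
    Matrix (ι × Fin 2) (ι × Fin 2) ℝ :=
  fun p q =>
    if p.1 = q.1 ∧ p.2 = 0 ∧ q.2 = 1 then 1
    else if p.1 = q.1 ∧ p.2 = 1 ∧ q.2 = 0 then -1
    else 0

/-- The bona fide (uncertainty) condition on a covariance matrix `γ`:
`γ + iΩ` is positive semidefinite as a complex Hermitian matrix. -/
def Uncertainty {ι : Type*} [Fintype ι] [DecidableEq ι]
    (γ : Matrix (ι × Fin 2) (ι × Fin 2) ℝ) : Prop :=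
  (γ.map Complex.ofReal + Complex.I • (symplecticForm ι).map Complex.ofReal).PosSemidef

variable {α β : Type*} [Fintype α] [Fintype β] [DecidableEq α] [DecidableEq β]

/-- Diagonal block of a bipartite covariance matrix on subsystem `A`. -/
def blkA (γ : Matrix ((α ⊕ β) × Fin 2) ((α ⊕ β) × Fin 2) ℝ) :
    Matrix (α × Fin 2) (α × Fin 2) ℝ :=
  γ.submatrix (fun p => (Sum.inl p.1, p.2)) (fun p => (Sum.inl p.1, p.2))

/-- Diagonal block of a bipartite covariance matrix on subsystem `B`. -/
def blkB (γ : Matrix ((α ⊕ β) × Fin 2) ((α ⊕ β) × Fin 2) ℝ) :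
    Matrix (β × Fin 2) (β × Fin 2) ℝ :=
  γ.submatrix (fun p => (Sum.inr p.1, p.2)) (fun p => (Sum.inr p.1, p.2))

/-- Off-diagonal block `ς` of a bipartite covariance matrix. -/
def offAB (γ : Matrix ((α ⊕ β) × Fin 2) ((α ⊕ β) × Fin 2) ℝ) :
    Matrix (α × Fin 2) (β × Fin 2) ℝ :=
  γ.submatrix (fun p => (Sum.inl p.1, p.2)) (fun p => (Sum.inr p.1, p.2))

/-- The Gaussian Rényi-2 entanglement `E₂(γ_{A:B})` of a bipartite covariance
matrix: the infimum of `(1/2) ln det σ_A` over pure covariance matrices `σ`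
(real symmetric, `σ + iΩ ⪰ 0`, `det σ = 1`) with `σ ≤ γ` in the Loewner
order. -/
noncomputable def E2 (γ : Matrix ((α ⊕ β) × Fin 2) ((α ⊕ β) × Fin 2) ℝ) : ℝ :=
  sInf {x | ∃ σ : Matrix ((α ⊕ β) × Fin 2) ((α ⊕ β) × Fin 2) ℝ,
    σ.IsSymm ∧ Uncertainty σ ∧ σ.det = 1 ∧ (γ - σ).PosSemidef ∧
    x = (1/2) * Real.log (blkA σ).det}

/-- The Gaussian Rényi-2 one-way classical correlations `J₂(γ_{A|B})`:
the supremum over Gaussian measurement seeds `Γ` on `B` of the decrease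
`(1/2) ln ( det γ_A / det(γ_A − ς (γ_B + Γ)^{-1} ςᵀ) )` of the Rényi-2
entropy of `A`. -/
noncomputable def J2 (γ : Matrix ((α ⊕ β) × Fin 2) ((α ⊕ β) × Fin 2) ℝ) : ℝ :=
  sSup {x | ∃ Γ : Matrix (β × Fin 2) (β × Fin 2) ℝ,
    Γ.IsSymm ∧ Uncertainty Γ ∧
    x = (1/2) * Real.log ((blkA γ).det /
      (blkA γ - offAB γ * (blkB γ + Γ)⁻¹ * (offAB γ)ᵀ).det)}

theorem Uncertainty.posSemidef {ι : Type*} [Fintype ι] [DecidableEq ι]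
    {γ : Matrix (ι × Fin 2) (ι × Fin 2) ℝ} (hsym : γ.IsSymm) (h : Uncertainty γ) :
    γ.PosSemidef := by
  refine .of_dotProduct_mulVec_nonneg ?_ fun x => ?_
  · rw [Matrix.IsHermitian, conjTranspose_eq_transpose_of_trivial]
    exact hsym
  -- On a real vector `x` the `iΩ` part contributes only to the imaginary part of the form.
  · have hx := (Complex.le_def.mp (h.dotProduct_mulVec_nonneg fun i => (x i : ℂ))).1
    simpa [dotProduct, mulVec] using hx

theorem one_add_trace_le_det_one_add {n : Type*} [Fintype n] [DecidableEq n]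
    {M : Matrix n n ℝ} (hM : M.PosSemidef) : 1 + M.trace ≤ (1 + M).det := by
  have hdet : (1 + M).det = ∏ i, (1 + hM.1.eigenvalues i) := by
    -- Evaluate the characteristic polynomial `∏ (X - λᵢ)` at `-1`.
    have h1 : (-(1 + M)).det = ∏ i, -(1 + hM.1.eigenvalues i) := by
      have h := congrArg (Polynomial.eval (-1)) hM.1.charpoly_eq
      rw [Matrix.eval_charpoly, Polynomial.eval_prod] at h
      have e : -(1 + M) = scalar n (-1) - M := by rw [map_neg, map_one]; abel
      rw [e]
      refine h.trans (Finset.prod_congr rfl fun i _ => ?_)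
      rw [Polynomial.eval_sub, Polynomial.eval_X, Polynomial.eval_C, RCLike.ofReal_real_eq_id, id]
      ring
    rw [Matrix.det_neg, Finset.prod_neg] at h1
    exact mul_left_cancel₀ (pow_ne_zero _ (by norm_num)) h1
  have hsum : ∀ s : Finset n,
      1 + ∑ i ∈ s, hM.1.eigenvalues i ≤ ∏ i ∈ s, (1 + hM.1.eigenvalues i) := by
    intro s
    induction s using Finset.induction_on with
    | empty => simp
    | insert a s ha ih =>
      rw [Finset.sum_insert ha, Finset.prod_insert ha]
      have h0 := hM.eigenvalues_nonneg a
      have h1 : 0 ≤ ∑ i ∈ s, hM.1.eigenvalues i :=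
        Finset.sum_nonneg fun i _ => hM.eigenvalues_nonneg i
      nlinarith [mul_nonneg h0 h1]
  rw [hdet, hM.1.trace_eq_sum_eigenvalues]
  simpa using hsum Finset.univ

open scoped MatrixOrder in
/-- The determinant is strictly monotone in the Loewner order above an invertible positive
semidefinite matrix. -/
theorem eq_of_posSemidef_sub_of_det_eq {n : Type*} [Fintype n] [DecidableEq n]
    {σ γ : Matrix n n ℝ} (hσ : σ.PosSemidef) (h0 : σ.det ≠ 0) (hle : (γ - σ).PosSemidef)
    (hdet : γ.det = σ.det) : σ = γ := by
  obtain ⟨B, rfl⟩ := CStarAlgebra.nonneg_iff_eq_star_mul_self.mp hσ.nonneg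
  rw [star_eq_conjTranspose] at *
  have hB : IsUnit B.det := by
    rw [isUnit_iff_ne_zero]
    rintro hB
    simp [hB] at h0
  have hBB : B * B⁻¹ = 1 := Matrix.mul_nonsing_inv B hB
  have hBB' : B⁻¹ᴴ * Bᴴ = 1 := by rw [← conjTranspose_mul, hBB, conjTranspose_one]
  set M := B⁻¹ᴴ * (γ - Bᴴ * B) * B⁻¹ with hMdef
  have hM : M.PosSemidef := hle.conjTranspose_mul_mul_same _
  have hinv : B⁻¹ᴴ * (Bᴴ * B) * B⁻¹ = 1 := by
    rw [← Matrix.mul_assoc, hBB', Matrix.one_mul, hBB]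
  have h1M : 1 + M = B⁻¹ᴴ * γ * B⁻¹ := by
    rw [hMdef, Matrix.mul_sub, Matrix.sub_mul, hinv]; abel
  have hd : (1 + M).det = 1 := by
    rw [h1M, det_mul, det_mul, hdet, ← det_mul, ← det_mul, hinv, det_one]
  have htr : M.trace = 0 :=
    le_antisymm (by linarith [one_add_trace_le_det_one_add hM]) hM.trace_nonneg
  have hM0 := hM.trace_eq_zero_iff.mp htr
  have hγ : Bᴴ * M * B = γ - Bᴴ * B := by
    have e1 : Bᴴ * B⁻¹ᴴ = 1 := by
      rw [← conjTranspose_mul, Matrix.nonsing_inv_mul B hB, conjTranspose_one]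
    calc Bᴴ * M * B = (Bᴴ * B⁻¹ᴴ) * (γ - Bᴴ * B) * (B⁻¹ * B) := by
          rw [hMdef]; simp only [Matrix.mul_assoc]
      _ = γ - Bᴴ * B := by
          rw [e1, Matrix.nonsing_inv_mul B hB, Matrix.one_mul, Matrix.mul_one]
  rw [hM0, Matrix.mul_zero, Matrix.zero_mul] at hγ
  exact (sub_eq_zero.mp hγ.symm).symm

/-- **Gaussian Rényi-2 entanglement of pure states.**  For a pure bipartite
covariance matrix `γ_{AB}` (real symmetric, `γ + iΩ ⪰ 0`, `det γ = 1`),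
the Gaussian Rényi-2 entanglement equals the Rényi-2 entropy of the reduced
state: `E₂(γ_{A:B}) = (1/2) ln det γ_A`. -/
theorem renyi2_entanglement_pure (nA nB : ℕ)
    (γ : Matrix ((Fin nA ⊕ Fin nB) × Fin 2) ((Fin nA ⊕ Fin nB) × Fin 2) ℝ)
    (hsym : γ.IsSymm) (hunc : Uncertainty γ) (hpure : γ.det = 1) :
    E2 γ = (1/2) * Real.log (blkA γ).det := by
  have hset : {x | ∃ σ : Matrix ((Fin nA ⊕ Fin nB) × Fin 2) ((Fin nA ⊕ Fin nB) × Fin 2) ℝ,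
      σ.IsSymm ∧ Uncertainty σ ∧ σ.det = 1 ∧ (γ - σ).PosSemidef ∧
      x = (1/2) * Real.log (blkA σ).det} = {(1/2) * Real.log (blkA γ).det} := by
    ext x
    constructor
    · rintro ⟨σ, hs, hu, hd, hle, rfl⟩
      rw [eq_of_posSemidef_sub_of_det_eq (hu.posSemidef hs) (by simp [hd]) hle (by rw [hpure, hd])]
      rfl
    · rintro rfl
      exact ⟨γ, hsym, hunc, hpure, by simpa using Matrix.PosSemidef.zero, rfl⟩
  rw [E2, hset, csInf_singleton]
end

section
/- Let γ_{AB} be a positive definite real symmetric covariance matrix of an (n_A + n_B)-mode system in block form γ_{AB} = [[γ_A, ς],[ςᵀ, γ_B]], and let Γ be any 2n_B×2n_B real symmetric matrix with Γ + iΩ_{n_B} positive semidefinite (a Gaussian measurement seed on B). Then the conditional covariance matrix after the measurement, γ̃_A^Π = γ_A − ς (γ_B + Γ)^{-1} ςᵀ, satisfies det γ_B · det γ̃_A^Π ≥ det γ_{AB}. Consequently the Gaussian Rényi-2 discord D₂(γ_{A|B}) = inf_Γ (1/2) ln( det γ_B · det(γ_A − ς(γ_B+Γ)^{-1}ςᵀ)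 / det γ_{AB} ) is nonnegative. -/
/-!
The Schur complement formula gives `det γ_AB = det γ_B * det (γ_A - ς γ_B⁻¹ ςᵀ)`, so the first claim
says that replacing `γ_B` by `γ_B + Γ` does not decrease the determinant of the Schur complement.
Testing `Γ + iΩ ⪰ 0` on real vectors shows that `Γ` is positive semidefinite
(`Uncertainty.posSemidef_real`), because `iΩ` contributes only to the imaginary part. Hence
`(γ_B + Γ)⁻¹ ⪯ γ_B⁻¹` (`posSemidef_inv_sub_inv_add`), and the conditional covariance matrix is the
positive definite Schur complement plus a positive semidefinite matrix; the determinant is monotone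
under such perturbations (`det_le_det_add`). Every logarithm in the infimum is then that of a number
at least `1`. A set of nonnegative reals has nonnegative `sInf`.
-/

open Matrix
open scoped ComplexOrder

theorem one_le_det_one_add {n : Type*} [Fintype n] [DecidableEq n] {Q : Matrix n n ℝ}
    (hQ : Q.PosSemidef) : 1 ≤ (1 + Q).det := by
  -- The characteristic polynomial at `-1` is `det (-(1 + Q))`, which yields `∏ (1 + λᵢ)`.
  have h := congrArg (Polynomial.eval (-1 : ℝ)) hQ.1.charpoly_eq
  rw [Matrix.eval_charpoly, Polynomial.eval_prod] at h
  have h1 : Matrix.scalar n (-1 : ℝ) - Q = -(1 + Q) := by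
    rw [map_neg, map_one]; abel
  have h2 : ∏ i, Polynomial.eval (-1 : ℝ)
      (Polynomial.X - Polynomial.C ((hQ.1.eigenvalues i : ℝ))) =
      (-1) ^ Fintype.card n * ∏ i, (1 + hQ.1.eigenvalues i) := by
    rw [← Finset.card_univ, ← Finset.prod_const, ← Finset.prod_mul_distrib]
    refine Finset.prod_congr rfl fun i _ => ?_
    simp only [Polynomial.eval_sub, Polynomial.eval_X, Polynomial.eval_C]
    ring
  have h3 : (1 + Q).det = ∏ i, (1 + hQ.1.eigenvalues i) := by
    have h4 := h.trans h2
    rw [h1, Matrix.det_neg] at h4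
    exact mul_left_cancel₀ (pow_ne_zero _ (by norm_num)) h4
  rw [h3]
  exact Finset.one_le_prod fun i _ => by linarith [hQ.eigenvalues_nonneg i]

open scoped MatrixOrder in
/-- The determinant is monotone in the Loewner order above a positive definite matrix: writing
`P = Xᴴ X`, one has `det (A + P) = det A * det (1 + X A⁻¹ Xᴴ)`. -/
theorem det_le_det_add {n : Type*} [Fintype n] [DecidableEq n] {A P : Matrix n n ℝ}
    (hA : A.PosDef) (hP : P.PosSemidef) : A.det ≤ (A + P).det := by
  obtain ⟨X, rfl⟩ := CStarAlgebra.nonneg_iff_eq_star_mul_self.mp hP.nonneg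
  rw [Matrix.det_add_mul _ _ hA.det_pos.ne'.isUnit]
  exact le_mul_of_one_le_right hA.det_pos.le
    (one_le_det_one_add (hA.inv.posSemidef.mul_mul_conjTranspose_same X))

/-- Antitonicity of the inverse in the Loewner order, from the identity
`B⁻¹ - C⁻¹ = C⁻¹ (G + G B⁻¹ G) C⁻¹` with `C = B + G`. -/
theorem posSemidef_inv_sub_inv_add {n : Type*} [Fintype n] [DecidableEq n] {B G : Matrix n n ℝ}
    (hB : B.PosDef) (hG : G.PosSemidef) : (B⁻¹ - (B + G)⁻¹).PosSemidef := by
  have hC : (B + G).PosDef := hB.add_posSemidef hG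
  have hBu : IsUnit B.det := hB.det_pos.ne'.isUnit
  have hCu : IsUnit (B + G).det := hC.det_pos.ne'.isUnit
  have hM : (G + G * B⁻¹ * G).PosSemidef := by
    have := hB.inv.posSemidef.mul_mul_conjTranspose_same G
    rw [hG.1.eq] at this
    exact hG.add this
  have key := hM.mul_mul_conjTranspose_same (B + G)⁻¹
  rw [hC.inv.1.eq] at key
  have h1 : G + G * B⁻¹ * G = (B + G) * (B⁻¹ - (B + G)⁻¹) * (B + G) := by
    rw [Matrix.mul_sub, Matrix.mul_nonsing_inv _ hCu, Matrix.sub_mul, Matrix.one_mul,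
      Matrix.add_mul, Matrix.mul_nonsing_inv _ hBu, Matrix.add_mul, Matrix.one_mul,
      Matrix.mul_add (G * B⁻¹), Matrix.mul_assoc G B⁻¹ B, Matrix.nonsing_inv_mul _ hBu,
      Matrix.mul_one]
    abel
  rwa [h1, Matrix.mul_assoc (B + G), Matrix.nonsing_inv_mul_cancel_left _ _ hCu,
    Matrix.mul_nonsing_inv_cancel_right _ _ hCu] at key

/-- A real symmetric matrix satisfying the uncertainty relation is positive semidefinite. -/
theorem Uncertainty.posSemidef_real {ι : Type*} [Fintype ι] [DecidableEq ι]
    {G : Matrix (ι × Fin 2) (ι × Fin 2) ℝ} (hs : G.IsSymm) (hG : Uncertainty G) :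
    G.PosSemidef := by
  refine Matrix.PosSemidef.of_dotProduct_mulVec_nonneg
    (by rw [Matrix.IsHermitian, Matrix.conjTranspose_eq_transpose_of_trivial]; exact hs) fun x => ?_
  have h := (Complex.le_def.mp (hG.dotProduct_mulVec_nonneg fun i => (x i : ℂ))).1
  simpa [dotProduct, Matrix.mulVec, Complex.re_sum, Complex.im_sum] using h

/-- In a positive definite block matrix the lower right block and its Schur complement are positive
definite, and their determinants multiply to that of the whole matrix. -/
theorem posDef_schur {m n : Type*} [Fintype m] [DecidableEq m] [Fintype n] [DecidableEq n]
    {A : Matrix m m ℝ} {S : Matrix m n ℝ} {B : Matrix n n ℝ}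
    (h : (Matrix.fromBlocks A S Sᵀ B).PosDef) :
    B.PosDef ∧ (A - S * B⁻¹ * Sᵀ).PosDef ∧
      (Matrix.fromBlocks A S Sᵀ B).det = B.det * (A - S * B⁻¹ * Sᵀ).det := by
  have hB : B.PosDef := h.submatrix (e := Sum.inr) Sum.inr_injective
  let _ : Invertible B := hB.isUnit.invertible
  have hdet := Matrix.det_fromBlocks₂₂ A S Sᵀ B
  rw [Matrix.invOf_eq_nonsing_inv] at hdet
  refine ⟨hB, ?_, hdet⟩
  have hpsd : (A - S * B⁻¹ * Sᵀ).PosSemidef := by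
    have := (Matrix.PosDef.fromBlocks₂₂ A S hB).mp
      (by rw [Matrix.conjTranspose_eq_transpose_of_trivial]; exact h.posSemidef)
    rwa [Matrix.conjTranspose_eq_transpose_of_trivial] at this
  rw [hpsd.posDef_iff_det_ne_zero]
  intro h0
  rw [h0, mul_zero] at hdet
  exact h.det_pos.ne' hdet

/-- **Nonnegativity of the Gaussian Rényi-2 discord.**  For a positive
definite covariance matrix `γ_{AB} = [[γ_A, ς],[ςᵀ, γ_B]]` and any Gaussian
measurement seed `Γ` on `B` (real symmetric, `Γ + iΩ ⪰ 0`), the conditional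
covariance matrix `γ̃_A = γ_A − ς (γ_B + Γ)^{-1} ςᵀ` satisfies
`det γ_B · det γ̃_A ≥ det γ_{AB}`; consequently the Gaussian Rényi-2 discord
`D₂(γ_{A|B}) = inf_Γ (1/2) ln(det γ_B det γ̃_A / det γ_{AB})` is
nonnegative. -/
theorem renyi2_discord_nonneg (nA nB : ℕ)
    (γA : Matrix (Fin nA × Fin 2) (Fin nA × Fin 2) ℝ)
    (ς : Matrix (Fin nA × Fin 2) (Fin nB × Fin 2) ℝ)
    (γB : Matrix (Fin nB × Fin 2) (Fin nB × Fin 2) ℝ)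
    (hpd : (Matrix.fromBlocks γA ς ςᵀ γB).PosDef) :
    (∀ Γ : Matrix (Fin nB × Fin 2) (Fin nB × Fin 2) ℝ,
        Γ.IsSymm → Uncertainty Γ →
        (Matrix.fromBlocks γA ς ςᵀ γB).det ≤
          γB.det * (γA - ς * (γB + Γ)⁻¹ * ςᵀ).det) ∧
    0 ≤ sInf {x | ∃ Γ : Matrix (Fin nB × Fin 2) (Fin nB × Fin 2) ℝ,
          Γ.IsSymm ∧ Uncertainty Γ ∧
          x = (1/2) * Real.log (γB.det * (γA - ς * (γB + Γ)⁻¹ * ςᵀ).det /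
                (Matrix.fromBlocks γA ς ςᵀ γB).det)} := by
  obtain ⟨hB, hS, hdet⟩ := posDef_schur hpd
  have key : ∀ Γ : Matrix (Fin nB × Fin 2) (Fin nB × Fin 2) ℝ,
        Γ.IsSymm → Uncertainty Γ →
        (Matrix.fromBlocks γA ς ςᵀ γB).det ≤
          γB.det * (γA - ς * (γB + Γ)⁻¹ * ςᵀ).det := by
    intro Γ hs hU
    have hP := (posSemidef_inv_sub_inv_add hB (hU.posSemidef_real hs)).mul_mul_conjTranspose_same ς
    rw [Matrix.conjTranspose_eq_transpose_of_trivial] at hP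
    have hsplit : γA - ς * (γB + Γ)⁻¹ * ςᵀ =
        (γA - ς * γB⁻¹ * ςᵀ) + ς * (γB⁻¹ - (γB + Γ)⁻¹) * ςᵀ := by
      rw [Matrix.mul_sub, Matrix.sub_mul]
      abel
    rw [hdet, hsplit]
    exact mul_le_mul_of_nonneg_left (det_le_det_add hS hP) hB.det_pos.le
  refine ⟨key, Real.sInf_nonneg ?_⟩
  rintro x ⟨Γ, hs, hU, rfl⟩
  exact mul_nonneg (by norm_num)
    (Real.log_nonneg ((one_le_div hpd.det_pos).mpr (key Γ hs hU)))
end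

section
/- Let γ_{ABC} be a pure covariance matrix of an n-mode system (real symmetric, γ_{ABC} + iΩ positive semidefinite, det γ_{ABC} = 1) partitioned into subsystems A, B, C, with reduced CMs γ_A, γ_{AB}, γ_{AC} given by the corresponding principal submatrices. Then the Rényi-2 entropy of A decomposes as (1/2) ln det γ_A = J₂(γ_{A|B}) + E₂(γ_{A:C}), where J₂(γ_{A|B}) is the Gaussian Rényi-2 one-way classical correlation of γ_{AB} with measurements on B, and E₂(γ_{A:C}) is the Gaussian Rényi-2 entanglement of γ_{AC}. -/
/-!
Write `D = A ⊕ C`, so that the pure state `γ` has blocks `γ_D`, `ς`, `γ_B` with respect to `D ⊕ B`.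
The claim is that measurements of `B` prepare on `D`, up to arbitrarily small errors, exactly the
covariance matrices below `γ_D`, and that among these the pure ones minimize `det σ_A`.

*Measurements give states.* For a seed `Γ`, the matrix `γ_D - ς (γ_B + Γ)⁻¹ ςᵀ` is a Schur
complement of `(γ + iΩ) + 0 ⊕ (Γ - iΩ) ⪰ 0`, hence a covariance matrix below `γ_D`
(`bonaFide_schur`). It dominates a pure one: a covariance matrix `γ` lies above
`γ^{1/2} |γ^{-1/2} Ω γ^{-1/2}| γ^{1/2}` (`BonaFide.exists_pure_le`). As the determinant is monotone
(`det_le_of_le`), `J₂ ≤ ½ ln det γ_A - E₂`.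

*States come from measurements.* Let `σ ≤ γ_D` be a covariance matrix and `N = γ_D - σ`. Purity of
`γ` means `γ Ω γ = Ω` (`BonaFide.mul_mul_of_det`), and its block form expresses `ς γ_B⁻¹ ςᵀ` and
`ς γ_B⁻¹ Ω γ_B⁻¹ ςᵀ` through `γ_D`. From this one constructs `X ⪰ 0` with `ς X ςᵀ = N` and
`X (γ_B - iΩ) X ≤ X` (`exists_seed`). If `X` is invertible, conjugating with `X⁻¹` shows that
`Γ = X⁻¹ - γ_B` is a covariance matrix, and `ς (γ_B + Γ)⁻¹ ςᵀ = N`, so that this measurement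
prepares `σ`. In general `X` is singular; but the condition `X (γ_B - iΩ) X ≤ X` is convex in `X`
and is satisfied by the invertible `½ γ_B⁻¹`, so `X` is replaced by
`(1 - ε) X + (ε / 2) γ_B⁻¹` and `ε` tends to `0` (`exists_measurement`, `exists_log_det_lt`).
Hence `J₂ ≥ ½ ln det γ_A - E₂`.
-/

open Matrix
open scoped ComplexOrder

variable {α β : Type*} [Fintype α] [Fintype β] [DecidableEq α] [DecidableEq β]

/-! ### Determinants of positive matrices -/

section Aux
variable {m n : Type*} [Fintype m] [Fintype n] [DecidableEq m] [DecidableEq n]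

open scoped MatrixOrder in
/-- The positive square root, which commutes with everything that commutes with `A`. -/
lemma exists_sqrt {A : Matrix n n ℝ} (hA : A.PosSemidef) :
    ∃ S : Matrix n n ℝ, S.PosSemidef ∧ S * S = A ∧ ∀ B, Commute A B → Commute S B := by
  refine ⟨CFC.sqrt A, ?_, ?_, ?_⟩
  · exact (CFC.sqrt_nonneg A).posSemidef
  · exact CFC.sqrt_mul_sqrt_self A hA.nonneg
  · intro B h
    rw [CFC.sqrt_eq_cfc]
    exact h.cfc_nnreal _

lemma exists_genInv {A : Matrix n n ℝ} (hA : A.IsHermitian) :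
    ∃ G : Matrix n n ℝ, A * G * A = A := by
  obtain ⟨U, d, rfl⟩ : ∃ (U : unitaryGroup n ℝ) (d : n → ℝ),
      A = Unitary.conjStarAlgAut ℝ _ U (diagonal d) := ⟨_, _, hA.spectral_theorem⟩
  refine ⟨Unitary.conjStarAlgAut ℝ _ U (diagonal fun i => (d i)⁻¹), ?_⟩
  rw [← map_mul, ← map_mul, diagonal_mul_diagonal, diagonal_mul_diagonal]
  congr 2
  ext i
  simp

lemma one_add_sum_le_prod {ι : Type*} (s : Finset ι) {f : ι → ℝ} (hf : ∀ i, 0 ≤ f i) :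
    1 + ∑ i ∈ s, f i ≤ ∏ i ∈ s, (1 + f i) := by
  classical
  induction s using Finset.induction_on with
  | empty => simp
  | insert a s ha ih =>
    rw [Finset.sum_insert ha, Finset.prod_insert ha]
    have := Finset.sum_nonneg (s := s) fun i _ => hf i
    nlinarith [hf a, mul_nonneg (hf a) this]

lemma one_le_det_one_add_s10 {C : Matrix n n ℝ} (hC : C.PosSemidef) :
    1 ≤ (1 + C).det ∧ ((1 + C).det = 1 → C = 0) := by
  have h := hC.1.spectral_theorem
  have h1 : (1 + C).det = ∏ i, (1 + hC.1.eigenvalues i) := by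
    have : 1 + C = Unitary.conjStarAlgAut ℝ _ hC.1.eigenvectorUnitary
        (diagonal fun i => 1 + hC.1.eigenvalues i) := by
      conv_lhs => rw [h]
      rw [← map_one (Unitary.conjStarAlgAut ℝ _ hC.1.eigenvectorUnitary), ← map_add,
        ← diagonal_one, diagonal_add]
      rfl
    rw [this, Unitary.conjStarAlgAut_apply, det_mul_right_comm,
      Unitary.mul_star_self_of_mem (SetLike.coe_mem _)]
    simp
  have h0 := hC.eigenvalues_nonneg
  have h2 : 1 + ∑ i, hC.1.eigenvalues i ≤ (1 + C).det := by
    rw [h1]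
    exact one_add_sum_le_prod _ h0
  have h3 : 0 ≤ ∑ i, hC.1.eigenvalues i := Finset.sum_nonneg fun i _ => h0 i
  refine ⟨by linarith, fun h4 => ?_⟩
  have h5 : ∑ i, hC.1.eigenvalues i = 0 := by linarith
  rw [← hC.1.eigenvalues_eq_zero_iff]
  ext i
  exact (Finset.sum_eq_zero_iff_of_nonneg (fun i _ => h0 i)).1 h5 i (Finset.mem_univ i)

/-- The determinant is strictly monotone on positive definite matrices: conjugating with `B^{-1/2}`
reduces this to `det (1 + C) ≥ 1 + tr C`. -/
lemma det_le_of_le {A B : Matrix n n ℝ} (hB : B.PosDef) (h : (A - B).PosSemidef) :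
    B.det ≤ A.det ∧ (A.det = B.det → A = B) := by
  obtain ⟨S, hS, hSB, -⟩ := exists_sqrt hB.posSemidef
  have hBd := hB.det_pos
  have hSd : S.det * S.det = B.det := by rw [← det_mul, hSB]
  have hSu : IsUnit S.det := by
    refine isUnit_iff_ne_zero.2 fun h0 => ?_
    rw [h0] at hSd; linarith
  have hSt : Sᴴ = S := hS.1
  have hi : (S⁻¹)ᴴ = S⁻¹ := by rw [conjTranspose_nonsing_inv, hSt]
  have hC := h.conjTranspose_mul_mul_same S⁻¹
  rw [hi] at hC
  have hA : A = S * (1 + S⁻¹ * (A - B) * S⁻¹) * S := by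
    have e1 := mul_nonsing_inv S hSu
    have e2 := nonsing_inv_mul S hSu
    have : S * (S⁻¹ * (A - B) * S⁻¹) * S = (S * S⁻¹) * (A - B) * (S⁻¹ * S) := by noncomm_ring
    rw [mul_add, add_mul, this, e1, e2, mul_one, one_mul, mul_one, hSB]
    abel
  obtain ⟨k1, k2⟩ := one_le_det_one_add_s10 hC
  have hd : A.det = B.det * (1 + S⁻¹ * (A - B) * S⁻¹).det := by
    conv_lhs => rw [hA]
    rw [det_mul, det_mul, ← hSd]; ring
  refine ⟨by rw [hd]; nlinarith, fun he => ?_⟩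
  have h1 : (1 + S⁻¹ * (A - B) * S⁻¹).det = 1 := by
    rw [hd] at he
    exact mul_left_cancel₀ hBd.ne' (by rw [he, mul_one])
  rw [k2 h1] at hA
  rw [hA, add_zero, mul_one, hSB]

/-! ### The uncertainty relation and pure states -/

/-- A real matrix regarded as a complex one; `cx γ + Complex.I • cx Ω` is the matrix `γ + iΩ`. -/
def cx {m n : Type*} (A : Matrix m n ℝ) : Matrix m n ℂ := A.map Complex.ofReal

section Cx
omit [Fintype m] [DecidableEq m] [DecidableEq n]

lemma cx_mul {k : Type*} (A : Matrix m n ℝ) (B : Matrix n k ℝ) : cx (A * B) = cx A * cx B :=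
  Matrix.map_mul (f := Complex.ofRealHom)

omit [Fintype n]
lemma cx_add (A B : Matrix m n ℝ) : cx (A + B) = cx A + cx B := by ext; simp [cx]
lemma cx_sub (A B : Matrix m n ℝ) : cx (A - B) = cx A - cx B := by ext; simp [cx]
lemma cx_neg (A : Matrix m n ℝ) : cx (-A) = -cx A := by ext; simp [cx]
lemma cx_zero : cx (0 : Matrix m n ℝ) = 0 := by ext; simp [cx]
lemma cx_smul (r : ℝ) (A : Matrix m n ℝ) : cx (r • A) = (r : ℂ) • cx A := by ext; simp [cx]
lemma cx_one [DecidableEq n] : cx (1 : Matrix n n ℝ) = 1 := by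
  ext i j; simp [cx, Matrix.one_apply, apply_ite]
lemma cx_conjTranspose (A : Matrix m n ℝ) : (cx A)ᴴ = cx Aᵀ := by ext; simp [cx]

/-- A complex matrix `A + iB` with `A`, `B` real vanishes only if `A` does. -/
lemma cx_eq_zero_of_add {A B : Matrix m n ℝ} (h : cx A + Complex.I • cx B = 0) : A = 0 := by
  ext i j
  have := congrArg Complex.re (congrFun (congrFun h i) j)
  simpa [cx] using this
end Cx

lemma cx_posSemidef {A : Matrix n n ℝ} (hA : A.PosSemidef) : (cx A).PosSemidef := by
  obtain ⟨S, hS, rfl, -⟩ := exists_sqrt hA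
  have h : (cx S)ᴴ = cx S := by rw [cx_conjTranspose]; exact congrArg cx hS.1
  have := posSemidef_conjTranspose_mul_self (cx S)
  rwa [h, ← cx_mul] at this

omit [DecidableEq n] in
lemma ofReal_dotProduct_mulVec (A : Matrix n n ℝ) (x : n → ℝ) :
    star (fun i => (x i : ℂ)) ⬝ᵥ (cx A *ᵥ fun i => (x i : ℂ)) = ((x ⬝ᵥ (A *ᵥ x) : ℝ) : ℂ) := by
  simp [dotProduct, mulVec, cx]

omit [DecidableEq n] in
lemma posSemidef_of_cx {A : Matrix n n ℝ} (h : (cx A).PosSemidef) : A.PosSemidef := by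
  refine .of_dotProduct_mulVec_nonneg ?_ fun x => ?_
  · ext i j
    have := congrFun (congrFun h.1 i) j
    simpa [cx] using this
  · have := h.dotProduct_mulVec_nonneg fun i => (x i : ℂ)
    rw [ofReal_dotProduct_mulVec] at this
    simpa using this

/-- The uncertainty relation `γ + iΩ ⪰ 0` for an arbitrary real matrix `Ω`, in use always
antisymmetric; for the standard form it is `Uncertainty γ` by definition. -/
def BonaFide (Ω γ : Matrix n n ℝ) : Prop := (cx γ + Complex.I • cx Ω).PosSemidef

section Sympl
variable {Ω γ : Matrix n n ℝ}

omit [Fintype n] [DecidableEq n] in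
lemma BonaFide.sub_posSemidef (hΩ : Ωᵀ = -Ω) (hγ : γ.IsSymm) (h : BonaFide Ω γ) :
    (cx γ - Complex.I • cx Ω).PosSemidef := by
  have := h.transpose
  have e : (cx γ + Complex.I • cx Ω)ᵀ = cx γᵀ + Complex.I • cx Ωᵀ := rfl
  rw [e, hΩ, hγ.eq, cx_neg] at this
  simpa [sub_eq_add_neg] using this

omit [DecidableEq n] in
lemma BonaFide.posSemidef (hΩ : Ωᵀ = -Ω) (hγ : γ.IsSymm) (h : BonaFide Ω γ) :
    γ.PosSemidef := by
  have h1 : (cx γ + Complex.I • cx Ω + (cx γ - Complex.I • cx Ω)).PosSemidef :=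
    PosSemidef.add h (h.sub_posSemidef hΩ hγ)
  have h2 : cx γ + Complex.I • cx Ω + (cx γ - Complex.I • cx Ω) = cx ((2 : ℝ) • γ) := by
    rw [cx_smul]; push_cast; rw [two_smul]; abel
  rw [h2] at h1
  have h3 := (posSemidef_of_cx h1).smul (a := (1 / 2 : ℝ)) (by norm_num)
  rw [smul_smul] at h3
  norm_num at h3
  exact h3

/-- A null vector of `γ` would be a null vector of `γ + iΩ`, hence of `Ω`. -/
lemma BonaFide.posDef (hΩ : Ωᵀ = -Ω) (hΩ2 : Ω * Ω = -1) (hγ : γ.IsSymm) (h : BonaFide Ω γ) :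
    γ.PosDef := by
  have hp := h.posSemidef hΩ hγ
  refine .of_dotProduct_mulVec_pos hp.1 fun x hx => ?_
  refine lt_of_le_of_ne (hp.dotProduct_mulVec_nonneg x) fun h0 => hx ?_
  have hγx : γ *ᵥ x = 0 := (hp.dotProduct_mulVec_zero_iff x).1 h0.symm
  have hΩx : x ⬝ᵥ (Ω *ᵥ x) = 0 := by
    have : x ⬝ᵥ (Ω *ᵥ x) = x ⬝ᵥ (Ωᵀ *ᵥ x) := by
      rw [mulVec_transpose, dotProduct_mulVec, dotProduct_comm]
    rw [hΩ, neg_mulVec, dotProduct_neg] at this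
    linarith
  have h1 : (cx γ + Complex.I • cx Ω) *ᵥ (fun i => (x i : ℂ)) = 0 := by
    refine (PosSemidef.dotProduct_mulVec_zero_iff h _).1 ?_
    rw [add_mulVec, smul_mulVec, dotProduct_add, dotProduct_smul, ofReal_dotProduct_mulVec,
      ofReal_dotProduct_mulVec, hΩx, hγx]
    simp
  have h2 : Ω *ᵥ x = 0 := by
    ext i
    have := congrArg Complex.im (congrFun h1 i)
    simpa [cx, mulVec, dotProduct, add_mul] using this
  have h3 : (Ω * Ω) *ᵥ x = 0 := by rw [← mulVec_mulVec, h2, mulVec_zero]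
  simpa [hΩ2, neg_mulVec] using h3

/-- `Ωᵀ γ⁻¹ Ω ≤ γ` for a covariance matrix (note `Ωᵀ = -Ω`): with `w = iΩ`, one has
`(γ ± w) γ⁻¹ (γ ∓ w) = γ - w γ⁻¹ w`, so that `2 (γ - w γ⁻¹ w)` is the sum of `γ - w` conjugated with
`γ⁻¹ (γ + w)` and `γ + w` conjugated with `γ⁻¹ (γ - w)`. -/
lemma BonaFide.add_mul_inv_mul (hΩ : Ωᵀ = -Ω) (hΩ2 : Ω * Ω = -1) (hγ : γ.IsSymm)
    (h : BonaFide Ω γ) : (γ + Ω * γ⁻¹ * Ω).PosSemidef := by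
  have hpd := h.posDef hΩ hΩ2 hγ
  have hu : IsUnit γ.det := isUnit_iff_ne_zero.2 hpd.det_pos.ne'
  have hm : (cx γ - Complex.I • cx Ω).PosSemidef := h.sub_posSemidef hΩ hγ
  have hp : (cx γ + Complex.I • cx Ω).PosSemidef := h
  have e0 : cx (γ + Ω * γ⁻¹ * Ω) =
      cx γ - (Complex.I • cx Ω) * cx γ⁻¹ * (Complex.I • cx Ω) := by
    rw [cx_add, cx_mul, cx_mul]
    simp [smul_smul, sub_eq_add_neg]
  have g1 : cx γ * cx γ⁻¹ = 1 := by rw [← cx_mul, mul_nonsing_inv _ hu, cx_one]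
  have g2 : cx γ⁻¹ * cx γ = 1 := by rw [← cx_mul, nonsing_inv_mul _ hu, cx_one]
  have hi : (cx γ⁻¹)ᴴ = cx γ⁻¹ := (cx_posSemidef hpd.inv.posSemidef).1
  generalize cx γ = g at *
  generalize cx γ⁻¹ = gi at *
  generalize Complex.I • cx Ω = w at *
  have k1 := hm.conjTranspose_mul_mul_same (gi * (g + w))
  have k2 := hp.conjTranspose_mul_mul_same (gi * (g - w))
  rw [conjTranspose_mul, hi, hp.1.eq] at k1
  rw [conjTranspose_mul, hi, hm.1.eq] at k2
  have s1 : (g + w) * gi * (g - w) = g - w * gi * w := by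
    have : (g + w) * gi * (g - w) = (g * gi) * g - (g * gi) * w + w * (gi * g) - w * gi * w := by
      noncomm_ring
    rw [this, g1, g2]; noncomm_ring
  have s2 : (g - w) * gi * (g + w) = g - w * gi * w := by
    have : (g - w) * gi * (g + w) = (g * gi) * g + (g * gi) * w - w * (gi * g) - w * gi * w := by
      noncomm_ring
    rw [this, g1, g2]; noncomm_ring
  have k3 := k1.add k2
  have s3 : (g + w) * gi * (g - w) * (gi * (g + w)) + (g - w) * gi * (g + w) * (gi * (g - w))
      = (2 : ℝ) • (g - w * gi * w) := by
    rw [s1, s2]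
    have : (g - w * gi * w) * (gi * (g + w)) + (g - w * gi * w) * (gi * (g - w)) =
      2 * ((g - w * gi * w) * (gi * g)) := by noncomm_ring
    rw [this, g2, two_smul]; noncomm_ring
  rw [s3] at k3
  have k4 := k3.smul (a := (1 / 2 : ℝ)) (by norm_num)
  rw [smul_smul] at k4
  norm_num at k4
  rw [← e0] at k4
  exact posSemidef_of_cx k4

/-- Pure covariance matrices are symplectic: `Ωᵀ γ⁻¹ Ω ≤ γ` and both sides have determinant one,
so they are equal. -/
lemma BonaFide.mul_mul_of_det (hΩ : Ωᵀ = -Ω) (hΩ2 : Ω * Ω = -1) (hγ : γ.IsSymm)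
    (h : BonaFide Ω γ) (hd : γ.det = 1) : γ * Ω * γ = Ω := by
  have hpd := h.posDef hΩ hΩ2 hγ
  have hu : IsUnit γ.det := isUnit_iff_ne_zero.2 hpd.det_pos.ne'
  have hE := h.add_mul_inv_mul hΩ hΩ2 hγ
  have hΩΩ : Ωᵀ * Ω = 1 := by rw [hΩ, neg_mul, hΩ2, neg_neg]
  have hinj : Function.Injective Ω.mulVec := by
    intro x y hxy
    have := congrArg (Ωᵀ *ᵥ ·) hxy
    simpa [mulVec_mulVec, hΩΩ] using this
  have hB : (Ωᴴ * γ⁻¹ * Ω).PosDef := hpd.inv.conjTranspose_mul_mul_same hinj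
  have hΩH : Ωᴴ = -Ω := hΩ
  have hBd : (Ωᴴ * γ⁻¹ * Ω).det = 1 := by
    have e : (Ωᴴ).det * Ω.det = 1 := by
      rw [← det_mul]; exact (congrArg det hΩΩ).trans det_one
    rw [det_mul, det_mul, det_nonsing_inv, hd, Ring.inverse_one, mul_one, e]
  have hle : (γ - Ωᴴ * γ⁻¹ * Ω).PosSemidef := by
    rw [hΩH]; simpa using hE
  have he := (det_le_of_le hB hle).2 (by rw [hd, hBd])
  calc γ * Ω * γ = Ωᴴ * γ⁻¹ * (Ω * Ω) * γ := by
        conv_lhs => enter [1, 1]; rw [he]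
        noncomm_ring
    _ = Ω * (γ⁻¹ * γ) := by rw [hΩ2, hΩH]; noncomm_ring
    _ = Ω := by rw [nonsing_inv_mul _ hu, mul_one]

/-- A positive definite `σ` with `σΩσ = Ω` is a pure covariance matrix. -/
lemma pure_of_mul_mul {σ : Matrix n n ℝ} (hΩ : Ωᵀ = -Ω) (hΩ2 : Ω * Ω = -1) (hσ : σ.PosDef)
    (h : σ * Ω * σ = Ω) : BonaFide Ω σ ∧ σ.det = 1 := by
  have hu : IsUnit σ.det := isUnit_iff_ne_zero.2 hσ.det_pos.ne'
  have hΩd : Ω.det ≠ 0 := by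
    intro h0
    have : (Ω * Ωᵀ).det = 1 := by rw [hΩ, mul_neg, hΩ2, neg_neg, det_one]
    rw [det_mul, h0, zero_mul] at this
    exact zero_ne_one this
  have hσs : σᵀ = σ := hσ.1
  refine ⟨?_, ?_⟩
  · have e0 : Ω * σ⁻¹ * Ω = -σ := by
      calc Ω * σ⁻¹ * Ω = σ * Ω * (σ * σ⁻¹) * Ω := by
            conv_lhs => enter [1, 1]; rw [← h]
            noncomm_ring
        _ = σ * (Ω * Ω) := by rw [mul_nonsing_inv _ hu]; noncomm_ring
        _ = -σ := by rw [hΩ2]; noncomm_ring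
    have k := (cx_posSemidef hσ.inv.posSemidef).conjTranspose_mul_mul_same
      (cx σ + Complex.I • cx Ω)
    have hH : (cx σ + Complex.I • cx Ω)ᴴ = cx σ + Complex.I • cx Ω := by
      rw [conjTranspose_add, conjTranspose_smul, cx_conjTranspose, cx_conjTranspose, hΩ, hσs,
        cx_neg]
      simp
    rw [hH] at k
    have g1 : cx σ * cx σ⁻¹ = 1 := by rw [← cx_mul, mul_nonsing_inv _ hu, cx_one]
    have g2 : cx σ⁻¹ * cx σ = 1 := by rw [← cx_mul, nonsing_inv_mul _ hu, cx_one]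
    have g3 : (Complex.I • cx Ω) * cx σ⁻¹ * (Complex.I • cx Ω) = cx σ := by
      have : cx Ω * cx σ⁻¹ * cx Ω = - cx σ := by rw [← cx_mul, ← cx_mul, e0, cx_neg]
      simp [smul_smul, this]
    have e1 : (cx σ + Complex.I • cx Ω) * cx σ⁻¹ * (cx σ + Complex.I • cx Ω)
        = (2 : ℝ) • (cx σ + Complex.I • cx Ω) := by
      generalize cx σ = s at *
      generalize cx σ⁻¹ = si at *
      generalize Complex.I • cx Ω = w at *
      have : (s + w) * si * (s + w) = (s * si) * s + (s * si) * w + w * (si * s) + w * si * w := by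
        noncomm_ring
      rw [this, g1, g2, g3, two_smul]; noncomm_ring
    rw [e1] at k
    have k4 := k.smul (a := (1 / 2 : ℝ)) (by norm_num)
    rw [smul_smul] at k4
    norm_num at k4
    exact k4
  · have h1 := congrArg det h
    rw [det_mul, det_mul] at h1
    have h2 : σ.det * σ.det = 1 := by
      apply mul_right_cancel₀ hΩd
      linear_combination h1
    nlinarith [hσ.det_pos]

omit γ Ω in
/-- `1 - Q = (1 + Q)⁻¹ ((1 - Q²) + Q^{1/2} (1 - Q²) Q^{1/2}) (1 + Q)⁻¹`. -/
lemma posSemidef_one_sub_of_mul_self {Q : Matrix n n ℝ} (hQ : Q.PosSemidef)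
    (h : (1 - Q * Q).PosSemidef) : (1 - Q).PosSemidef := by
  have hi : (1 + Q).PosDef := PosDef.one.add_posSemidef hQ
  have hu : IsUnit (1 + Q).det := isUnit_iff_ne_zero.2 hi.det_pos.ne'
  obtain ⟨s, hs, hss, hsc⟩ := exists_sqrt hQ
  have hsQ : s * Q = Q * s := hsc Q (Commute.refl Q)
  have k1 := h.conjTranspose_mul_mul_same s
  rw [hs.1.eq] at k1
  have k2 := (h.add k1).conjTranspose_mul_mul_same (1 + Q)⁻¹
  rw [hi.inv.1.eq] at k2
  have e1 : 1 - Q * Q + s * (1 - Q * Q) * s = (1 + Q) * (1 - Q) * (1 + Q) := by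
    have : s * (1 - Q * Q) * s = s * s - (s * Q) * Q * s := by noncomm_ring
    rw [this, hsQ]
    have : Q * s * Q * s = Q * (s * Q) * s := by noncomm_ring
    rw [this, hsQ]
    have : Q * (Q * s) * s = Q * Q * (s * s) := by noncomm_ring
    rw [this, hss]; noncomm_ring
  have e2 : (1 + Q)⁻¹ * ((1 + Q) * (1 - Q) * (1 + Q)) * (1 + Q)⁻¹ =
      ((1 + Q)⁻¹ * (1 + Q)) * (1 - Q) * ((1 + Q) * (1 + Q)⁻¹) := by noncomm_ring
  rwa [e1, e2, nonsing_inv_mul _ hu, mul_nonsing_inv _ hu, one_mul, mul_one] at k2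

/-- Every covariance matrix dominates a pure one: with `K = γ^{-1/2} Ω γ^{-1/2}`, take
`σ = γ^{1/2} |K| γ^{1/2}`. -/
lemma BonaFide.exists_pure_le (hΩ : Ωᵀ = -Ω) (hΩ2 : Ω * Ω = -1) (hγ : γ.IsSymm)
    (h : BonaFide Ω γ) :
    ∃ σ : Matrix n n ℝ, σ.IsSymm ∧ BonaFide Ω σ ∧ σ.det = 1 ∧ (γ - σ).PosSemidef := by
  have hpd := h.posDef hΩ hΩ2 hγ
  obtain ⟨S, hS, hSS, -⟩ := exists_sqrt hpd.posSemidef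
  have hSu : IsUnit S.det := by
    refine isUnit_iff_ne_zero.2 fun h0 => hpd.det_pos.ne' ?_
    rw [← hSS, det_mul, h0, zero_mul]
  have hΩu : IsUnit Ω.det := by
    refine isUnit_iff_ne_zero.2 fun h0 => ?_
    have : (Ω * Ωᵀ).det = 1 := by rw [hΩ, mul_neg, hΩ2, neg_neg, det_one]
    rw [det_mul, h0, zero_mul] at this
    exact zero_ne_one this
  have hE := h.add_mul_inv_mul hΩ hΩ2 hγ
  have t1 := mul_nonsing_inv S hSu
  have t2 := nonsing_inv_mul S hSu
  have hSt : Sᵀ = S := hS.1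
  have hγi : γ⁻¹ = S⁻¹ * S⁻¹ := by rw [← hSS, Matrix.mul_inv_rev]
  have hTt : (S⁻¹)ᵀ = S⁻¹ := by rw [transpose_nonsing_inv, hSt]
  generalize hT : S⁻¹ = T at *
  set K := T * Ω * T with hK
  have hKt : Kᵀ = -K := by
    rw [hK, transpose_mul, transpose_mul, hTt, hΩ]; noncomm_ring
  have hKu : IsUnit K.det := by
    rw [hK, det_mul, det_mul, ← hT, det_nonsing_inv]
    exact (hSu.ringInverse.mul hΩu).mul hSu.ringInverse
  have hKK : (Kᵀ * K).PosSemidef := posSemidef_conjTranspose_mul_self K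
  obtain ⟨Q, hQ, hQQ, hQc⟩ := exists_sqrt hKK
  have hQK : Commute Q K := hQc K (by
    rw [hKt]; exact ((Commute.refl K).neg_left).mul_left (Commute.refl K))
  have hQd : Q.PosDef := by
    refine hQ.posDef_iff_det_ne_zero.2 fun h0 => ?_
    have := congrArg det hQQ
    rw [det_mul, det_mul, det_transpose, h0, zero_mul] at this
    exact (mul_ne_zero hKu.ne_zero hKu.ne_zero) this.symm
  -- `Q² ≤ 1`, hence `Q ≤ 1`
  have h1 : (1 - Q * Q).PosSemidef := by
    have := hE.conjTranspose_mul_mul_same T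
    have e : Tᴴ = T := hTt
    rw [e, hγi, ← hSS] at this
    convert this using 1
    rw [hQQ, hKt, hK]
    have e2 : T * (S * S + Ω * (T * T) * Ω) * T = (T * S) * (S * T) + T * Ω * T * (T * Ω * T) := by
      noncomm_ring
    rw [e2, t1, t2]; noncomm_ring
  have h2 : (1 - Q).PosSemidef := posSemidef_one_sub_of_mul_self hQ h1
  have hSinj : Function.Injective S.mulVec := by
    intro x y hxy
    have := congrArg (T *ᵥ ·) hxy
    simpa [mulVec_mulVec, t2] using this
  have hσ : (S * Q * S).PosDef := by
    have := hQd.conjTranspose_mul_mul_same hSinj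
    rwa [show Sᴴ = S from hSt] at this
  have hσΩ : (S * Q * S) * Ω * (S * Q * S) = Ω := by
    have e1 : S * K * S = Ω := by
      have : S * K * S = (S * T) * Ω * (T * S) := by rw [hK]; noncomm_ring
      rw [this, t1, t2]; noncomm_ring
    -- with `Ω⁻¹ = -Ω`, one gets `S Ω S = -K⁻¹`
    have e2 : (S * Ω * S) * K = -1 := by
      have : (S * Ω * S) * K = S * Ω * (S * T) * Ω * T := by rw [hK]; noncomm_ring
      rw [this, t1]
      have : S * Ω * 1 * Ω * T = S * (Ω * Ω) * T := by noncomm_ring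
      rw [this, hΩ2]
      have : S * (-1) * T = -(S * T) := by noncomm_ring
      rw [this, t1]
    have e3 : Q * (S * Ω * S) * Q * K = K * K := by
      have : Q * (S * Ω * S) * Q * K = Q * ((S * Ω * S) * K) * Q := by
        rw [mul_assoc, hQK.eq]; noncomm_ring
      rw [this, e2]
      have : Q * (-1) * Q = -(Q * Q) := by noncomm_ring
      rw [this, hQQ, hKt]; noncomm_ring
    have e4 : Q * (S * Ω * S) * Q = K := by
      have := congrArg (· * K⁻¹) e3
      simpa [mul_assoc, mul_nonsing_inv K hKu] using this
    have : (S * Q * S) * Ω * (S * Q * S) = S * (Q * (S * Ω * S) * Q) * S := by noncomm_ring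
    rw [this, e4, e1]
  obtain ⟨b1, b2⟩ := pure_of_mul_mul hΩ hΩ2 hσ hσΩ
  refine ⟨S * Q * S, hσ.1, b1, b2, ?_⟩
  have := h2.conjTranspose_mul_mul_same S
  rw [show Sᴴ = S from hSt] at this
  convert this using 1
  rw [← hSS]; noncomm_ring
end Sympl

/-! ### Seeds from states: the pure global state -/

section Core
variable {d b : Type*} [Fintype d] [DecidableEq d] [Fintype b] [DecidableEq b]

omit [DecidableEq n] in
/-- For `H = R Rᴴ` and `P ⪰ 0`, `P (L H Lᴴ) P ≤ P` implies `H (Lᴴ P L) H ≤ H`: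
the hypothesis gives `A² ≤ A` for `A = Rᴴ Lᴴ P L R`, hence `A ≤ 1`, and then `R A Rᴴ ≤ R Rᴴ`. -/
lemma posSemidef_sub_of_conj {P L R : Matrix n n ℂ} (hP : P.PosSemidef)
    (h : (P - P * L * (R * Rᴴ) * Lᴴ * P).PosSemidef) :
    (R * Rᴴ - R * Rᴴ * (Lᴴ * P * L) * (R * Rᴴ)).PosSemidef := by
  classical
  set A := Rᴴ * Lᴴ * P * L * R with hA
  have hAH : Aᴴ = A := by
    rw [hA]
    simp only [conjTranspose_mul, conjTranspose_conjTranspose, hP.1.eq, mul_assoc]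
  have h1 : (A - A * A).PosSemidef := by
    have := h.conjTranspose_mul_mul_same (L * R)
    convert this using 1
    rw [hA, conjTranspose_mul]; noncomm_ring
  have h2 : (1 - A).PosSemidef := by
    have := (posSemidef_conjTranspose_mul_self (1 - A)).add h1
    convert this using 1
    rw [conjTranspose_sub, hAH, conjTranspose_one]; noncomm_ring
  have h3 := h2.mul_mul_conjTranspose_same R
  convert h3 using 1
  rw [hA]; noncomm_ring

/-- The prospective inverse `X` of `γ_B + Γ`. For blocks `gD`, `s`, `gB` of a matrix with
`γ Ω γ = Ω`, put `E = s gB⁻¹ sᵀ = gD + ΩD gD⁻¹ ΩD` and `P = gD - iΩD`, `L = 1 + i gD⁻¹ ΩD`, so that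
`P L = E`. Every `0 ≤ N ≤ P` has kernel containing that of `E`, hence `N = E H E` with `H ⪰ 0` real,
and `X = gB⁻¹ sᵀ H s gB⁻¹` satisfies `s X sᵀ = N`. Moreover `V = gB⁻¹ sᵀ` intertwines,
`Vᵀ (gB - iΩB) V = Lᴴ P L`, so that `X (gB - iΩB) X ≤ X` follows from
`P (L H Lᴴ) P = E H E = N ≤ P`. -/
lemma exists_seed {ΩD gD N : Matrix d d ℝ} {ΩB gB : Matrix b b ℝ} {s : Matrix d b ℝ}
    (hΩD : ΩDᵀ = -ΩD) (hgD : gD.PosDef) (hgB : gB.PosDef)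
    (hΩB2 : ΩB * ΩB = -1) (hΩD2 : ΩD * ΩD = -1)
    (r1 : gD * ΩD * gD + s * ΩB * sᵀ = ΩD) (r2 : gD * ΩD * s + s * ΩB * gB = 0)
    (hM : (cx gD - Complex.I • cx ΩD).PosSemidef)
    (hN : N.PosSemidef) (hMN : (cx gD - Complex.I • cx ΩD - cx N).PosSemidef) :
    ∃ X : Matrix b b ℝ, X.PosSemidef ∧ s * X * sᵀ = N ∧
      (cx X - cx X * (cx gB - Complex.I • cx ΩB) * cx X).PosSemidef := by
  have huD : IsUnit gD.det := isUnit_iff_ne_zero.2 hgD.det_pos.ne'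
  have huB : IsUnit gB.det := isUnit_iff_ne_zero.2 hgB.det_pos.ne'
  have hBt : (gB⁻¹)ᵀ = gB⁻¹ := hgB.inv.1
  have hDt : (gD⁻¹)ᵀ = gD⁻¹ := hgD.inv.1
  have hDt' : gDᵀ = gD := hgD.1
  have q1 : s * gB⁻¹ * ΩB = -(ΩD * gD⁻¹ * s) := by
    have h1 : s * ΩB * gB = -(gD * ΩD * s) := by rw [eq_neg_iff_add_eq_zero, add_comm, r2]
    have h2 : s * ΩB = -(gD * ΩD * s * gB⁻¹) := by
      calc s * ΩB = s * ΩB * gB * gB⁻¹ := by rw [Matrix.mul_nonsing_inv_cancel_right _ _ huB]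
        _ = _ := by rw [h1, Matrix.neg_mul]
    have h3 : ΩD * gD⁻¹ * (s * ΩB) = s * gB⁻¹ := by
      rw [h2]
      calc ΩD * gD⁻¹ * -(gD * ΩD * s * gB⁻¹) = -(ΩD * (gD⁻¹ * gD) * ΩD * s * gB⁻¹) := by
            simp only [Matrix.mul_neg, Matrix.mul_assoc]
        _ = -(ΩD * ΩD * s * gB⁻¹) := by rw [nonsing_inv_mul _ huD, Matrix.mul_one]
        _ = s * gB⁻¹ := by rw [hΩD2]; simp
    rw [← h3]
    calc ΩD * gD⁻¹ * (s * ΩB) * ΩB = ΩD * gD⁻¹ * s * (ΩB * ΩB) := by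
          simp only [Matrix.mul_assoc]
      _ = _ := by rw [hΩB2]; simp
  have q1' : s * gB⁻¹ = ΩD * gD⁻¹ * s * ΩB := by
    calc s * gB⁻¹ = -(s * gB⁻¹ * (ΩB * ΩB)) := by rw [hΩB2]; simp
      _ = -((s * gB⁻¹ * ΩB) * ΩB) := by simp only [Matrix.mul_assoc]
      _ = _ := by rw [q1]; simp
  set E := gD + ΩD * gD⁻¹ * ΩD with hE
  have q2 : s * gB⁻¹ * sᵀ = E := by
    rw [q1']
    have h1 : s * ΩB * sᵀ = ΩD - gD * ΩD * gD := by rw [eq_sub_iff_add_eq, add_comm, r1]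
    calc ΩD * gD⁻¹ * s * ΩB * sᵀ = ΩD * gD⁻¹ * (s * ΩB * sᵀ) := by simp only [Matrix.mul_assoc]
      _ = ΩD * gD⁻¹ * ΩD - ΩD * (gD⁻¹ * gD) * ΩD * gD := by rw [h1]; noncomm_ring
      _ = ΩD * gD⁻¹ * ΩD - ΩD * ΩD * gD := by rw [nonsing_inv_mul _ huD, Matrix.mul_one]
      _ = E := by rw [hΩD2, hE]; noncomm_ring
  have q3 : s * gB⁻¹ * ΩB * gB⁻¹ * sᵀ = -(ΩD * gD⁻¹ * E) := by
    rw [q1, ← q2]; simp only [Matrix.neg_mul, Matrix.mul_assoc]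
  have hEt : Eᵀ = E := by
    rw [hE, transpose_add, transpose_mul, transpose_mul, hDt, hDt', hΩD]; noncomm_ring
  set w := Complex.I • cx ΩD with hw
  have hwH : wᴴ = w := by
    rw [hw, conjTranspose_smul, cx_conjTranspose, hΩD, cx_neg]; simp
  have g1 : cx gD * cx gD⁻¹ = 1 := by rw [← cx_mul, mul_nonsing_inv _ huD, cx_one]
  have g2 : cx gD⁻¹ * cx gD = 1 := by rw [← cx_mul, nonsing_inv_mul _ huD, cx_one]
  have cE : cx E = cx gD - w * cx gD⁻¹ * w := by
    rw [hE, cx_add, cx_mul, cx_mul, hw]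
    simp [smul_smul, sub_eq_add_neg]
  set L := 1 + cx gD⁻¹ * w with hL
  have hLH : Lᴴ = 1 + w * cx gD⁻¹ := by
    rw [hL, conjTranspose_add, conjTranspose_mul, hwH, cx_conjTranspose, hDt, conjTranspose_one]
  have PL : (cx gD - w) * L = cx E := by
    rw [cE, hL]
    have : (cx gD - w) * (1 + cx gD⁻¹ * w) =
      cx gD - w + (cx gD * cx gD⁻¹) * w - w * cx gD⁻¹ * w := by noncomm_ring
    rw [this, g1]; noncomm_ring
  have LP : Lᴴ * (cx gD - w) = cx E := by
    rw [cE, hLH]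
    have : (1 + w * cx gD⁻¹) * (cx gD - w) =
      cx gD - w + w * (cx gD⁻¹ * cx gD) - w * cx gD⁻¹ * w := by noncomm_ring
    rw [this, g2]; noncomm_ring
  -- the kernel of `E` is contained in that of `N`
  obtain ⟨G, hG⟩ := exists_genInv (A := E) hEt
  have hEW : E * (1 - G * E) = 0 := by
    rw [mul_sub, mul_one, ← mul_assoc, hG, sub_self]
  obtain ⟨ν, hν, hνν, -⟩ := exists_sqrt hN
  have hνt : νᵀ = ν := hν.1
  have hNW : N * (1 - G * E) = 0 := by
    set W := 1 - G * E
    have k0 : (cx gD - w) * (L * cx W) = 0 := by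
      rw [← mul_assoc, PL, ← cx_mul, hEW, cx_zero]
    have k1 := hMN.conjTranspose_mul_mul_same (L * cx W)
    rw [mul_assoc, sub_mul, k0, zero_sub, mul_neg] at k1
    have cN : cx N = (cx ν)ᴴ * cx ν := by rw [cx_conjTranspose, hνt, ← cx_mul, hνν]
    have k2 : (L * cx W)ᴴ * (cx N * (L * cx W)) = 0 := by
      have k3 : ((L * cx W)ᴴ * (cx N * (L * cx W))).PosSemidef := by
        rw [← mul_assoc]; exact (cx_posSemidef hN).conjTranspose_mul_mul_same _
      open scoped MatrixOrder in
      exact le_antisymm (neg_nonneg.1 k1.nonneg) k3.nonneg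
    have k4 : cx ν * (L * cx W) = 0 := by
      rw [← conjTranspose_mul_self_eq_zero, conjTranspose_mul, ← k2, cN]
      simp only [Matrix.mul_assoc]
    have k5 : cx (N * W) + Complex.I • cx (N * gD⁻¹ * ΩD * W) = 0 := by
      calc _ = cx N * (L * cx W) := by
            rw [hL, hw]; simp only [cx_mul]
            rw [add_mul, mul_add, one_mul]
            simp only [Matrix.mul_smul, Matrix.smul_mul, Matrix.mul_assoc]
        _ = 0 := by rw [cN, Matrix.mul_assoc, k4, Matrix.mul_zero]
    exact cx_eq_zero_of_add k5
  have hνW : ν * (1 - G * E) = 0 := by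
    have e : νᴴ * ν = N := by rw [show νᴴ = ν from hνt, hνν]
    rw [← e] at hNW
    exact (conjTranspose_mul_self_mul_eq_zero _ _).1 hNW
  set R := Gᵀ * ν with hR
  have hER : E * R = ν := by
    have h1 : ν * G * E = ν := by
      rw [mul_sub, mul_one, sub_eq_zero, ← mul_assoc] at hνW; exact hνW.symm
    have h2 := congrArg transpose h1
    rwa [transpose_mul, transpose_mul, hEt, hνt] at h2
  have hRE : Rᵀ * E = ν := by
    have h2 := congrArg transpose hER
    rwa [transpose_mul, hEt, hνt] at h2
  set V := gB⁻¹ * sᵀ with hV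
  have hVt : Vᵀ = s * gB⁻¹ := by rw [hV, transpose_mul, transpose_transpose, hBt]
  have hsV : s * V = E := by rw [← q2, hV, Matrix.mul_assoc]
  have hVs : Vᵀ * sᵀ = E := by rw [hVt, q2]
  refine ⟨V * (R * Rᵀ) * Vᵀ, ?_, ?_, ?_⟩
  · have h1 : (R * Rᵀ).PosSemidef := posSemidef_self_mul_conjTranspose R
    exact h1.mul_mul_conjTranspose_same V
  · calc s * (V * (R * Rᵀ) * Vᵀ) * sᵀ = (s * V) * R * (Rᵀ * (Vᵀ * sᵀ)) := by
          simp only [Matrix.mul_assoc]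
      _ = N := by rw [hsV, hVs, hER, hRE, hνν]
  · have c1 : (cx V)ᴴ * (cx gB - Complex.I • cx ΩB) * cx V = Lᴴ * (cx gD - w) * L := by
      have e1 : Vᵀ * gB * V = E := by
        rw [hVt, Matrix.nonsing_inv_mul_cancel_right _ _ huB, hsV]
      have e2 : Vᵀ * ΩB * V = -(ΩD * gD⁻¹ * E) := by
        rw [hVt, ← q3, hV]; simp only [Matrix.mul_assoc]
      have e3 : Lᴴ * (cx gD - w) * L = Lᴴ * cx E := by rw [Matrix.mul_assoc, PL]
      rw [e3, hLH, cx_conjTranspose, Matrix.mul_sub, Matrix.sub_mul, Matrix.mul_smul,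
        Matrix.smul_mul, ← cx_mul, ← cx_mul, ← cx_mul, ← cx_mul, e1, e2, hw]
      simp [add_mul, cx_neg, cx_mul]
    have c2 := posSemidef_sub_of_conj (L := L) (R := cx R) hM (by
      have : (cx gD - w) * L * (cx R * (cx R)ᴴ) * Lᴴ * (cx gD - w) = cx N := by
        rw [PL, mul_assoc _ Lᴴ, LP, cx_conjTranspose, ← cx_mul, ← cx_mul, ← cx_mul]
        congr 1
        rw [← mul_assoc, hER, mul_assoc, hRE, hνν]
      rw [this]; exact hMN)
    have c3 := c2.mul_mul_conjTranspose_same (cx V)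
    rw [← c1] at c3
    have e4 : cx (V * (R * Rᵀ) * Vᵀ) = cx V * (cx R * (cx R)ᴴ) * (cx V)ᴴ := by
      rw [cx_conjTranspose, cx_conjTranspose, ← cx_mul, ← cx_mul, ← cx_mul]
    rw [e4]
    generalize cx gB - Complex.I • cx ΩB = M at *
    convert c3 using 1
    simp only [Matrix.mul_sub, Matrix.sub_mul, Matrix.mul_assoc]
end Core

/-! ### Measurements and conditional states -/

section Measure
variable {d b : Type*} [Fintype d] [DecidableEq d] [Fintype b] [DecidableEq b]
variable {ΩD gD : Matrix d d ℝ} {ΩB gB : Matrix b b ℝ} {s : Matrix d b ℝ}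

omit [DecidableEq b] in
/-- The set of `X` with `X M X ≤ X` is convex when `M ⪰ 0`. -/
lemma posSemidef_combo {M X Y : Matrix b b ℂ} (hM : M.PosSemidef) (hXH : Xᴴ = X) (hYH : Yᴴ = Y)
    (hX : (X - X * M * X).PosSemidef) (hY : (Y - Y * M * Y).PosSemidef)
    {ε : ℝ} (h0 : 0 ≤ ε) (h1 : ε ≤ 1) :
    (((1 - ε) • X + ε • Y) - ((1 - ε) • X + ε • Y) * M * ((1 - ε) • X + ε • Y)).PosSemidef := by
  have k1 := hX.smul (sub_nonneg.2 h1)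
  have k2 := hY.smul h0
  have k3 := (hM.conjTranspose_mul_mul_same (X - Y)).smul (mul_nonneg h0 (sub_nonneg.2 h1))
  rw [conjTranspose_sub, hXH, hYH] at k3
  convert (k1.add k2).add k3 using 1
  simp only [Matrix.mul_sub, Matrix.sub_mul, Matrix.mul_add, Matrix.add_mul, Matrix.smul_mul,
    Matrix.mul_smul, smul_sub]
  module

/-- If `X > 0` and `X (γ_B - iΩ) X ≤ X`, then `X⁻¹ - γ_B` is a covariance matrix. -/
lemma bonaFide_inv_sub {X : Matrix b b ℝ} (hgB : gB.IsSymm) (hX : X.PosDef)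
    (h : (cx X - cx X * (cx gB - Complex.I • cx ΩB) * cx X).PosSemidef) :
    (X⁻¹ - gB).IsSymm ∧ BonaFide ΩB (X⁻¹ - gB) := by
  have hu : IsUnit X.det := isUnit_iff_ne_zero.2 hX.det_pos.ne'
  refine ⟨Matrix.IsSymm.sub hX.inv.1 hgB, ?_⟩
  have k := h.conjTranspose_mul_mul_same (cx X⁻¹)
  have hi : (cx X⁻¹)ᴴ = cx X⁻¹ := (cx_posSemidef hX.inv.posSemidef).1
  have g1 : cx X * cx X⁻¹ = 1 := by rw [← cx_mul, mul_nonsing_inv _ hu, cx_one]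
  have g2 : cx X⁻¹ * cx X = 1 := by rw [← cx_mul, nonsing_inv_mul _ hu, cx_one]
  rw [hi] at k
  rw [BonaFide, cx_sub]
  generalize cx X = x at *
  generalize cx X⁻¹ = y at *
  convert k using 1
  generalize cx gB = g
  generalize Complex.I • cx ΩB = w
  have : y * (x - x * (g - w) * x) * y = (y * x) * y - (y * x) * (g - w) * (x * y) := by
    noncomm_ring
  rw [this, g1, g2]; noncomm_ring

/-- `X = ½ γ_B⁻¹`, which corresponds to the seed `Γ = γ_B`, satisfies `X (γ_B - iΩ) X ≤ X`. -/
lemma seed_half (hΩB : ΩBᵀ = -ΩB) (hΩB2 : ΩB * ΩB = -1) (hgB : gB.IsSymm)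
    (hB : BonaFide ΩB gB) :
    (cx ((1 / 2 : ℝ) • gB⁻¹) - cx ((1 / 2 : ℝ) • gB⁻¹) * (cx gB - Complex.I • cx ΩB) *
      cx ((1 / 2 : ℝ) • gB⁻¹)).PosSemidef := by
  have hpd := hB.posDef hΩB hΩB2 hgB
  have hu : IsUnit gB.det := isUnit_iff_ne_zero.2 hpd.det_pos.ne'
  have g1 : cx gB * cx gB⁻¹ = 1 := by rw [← cx_mul, mul_nonsing_inv _ hu, cx_one]
  have g2 : cx gB⁻¹ * cx gB = 1 := by rw [← cx_mul, nonsing_inv_mul _ hu, cx_one]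
  have hi : (cx gB⁻¹)ᴴ = cx gB⁻¹ := (cx_posSemidef hpd.inv.posSemidef).1
  have k := (PosSemidef.conjTranspose_mul_mul_same hB (cx gB⁻¹)).smul
    (a := (1 / 4 : ℝ)) (by norm_num)
  rw [hi] at k
  rw [cx_smul]
  generalize cx gB = x at *
  generalize cx gB⁻¹ = y at *
  generalize Complex.I • cx ΩB = w at *
  convert k using 1
  have e1 : y * (x + w) * y = y + y * w * y := by
    rw [mul_add, add_mul, g2, one_mul]
  have e2 : y * (x - w) * y = y - y * w * y := by
    rw [mul_sub, sub_mul, g2, one_mul]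
  have e3 : ((1 / 2 : ℝ) : ℂ) = 1 / 2 := by norm_num
  rw [Matrix.smul_mul, Matrix.smul_mul, Matrix.mul_smul, e1, e2, e3,
    ← Complex.coe_smul]
  push_cast
  module

/-- Approximate optimality of measurements: for a pure global state and any covariance matrix
`σ ≤ γ_D` some measurement of `B` leaves `D` in a state within `O(ε)` of `σ`. -/
lemma exists_measurement (hΩD : ΩDᵀ = -ΩD) (hΩD2 : ΩD * ΩD = -1)
    (hΩB : ΩBᵀ = -ΩB) (hΩB2 : ΩB * ΩB = -1)
    (hgD : gD.IsSymm) (hgB : gB.IsSymm) (hD : BonaFide ΩD gD) (hB : BonaFide ΩB gB)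
    (r1 : gD * ΩD * gD + s * ΩB * sᵀ = ΩD) (r2 : gD * ΩD * s + s * ΩB * gB = 0)
    {σ : Matrix d d ℝ} (hσ : σ.IsSymm) (hσu : BonaFide ΩD σ) (hle : (gD - σ).PosSemidef)
    {ε : ℝ} (h0 : 0 < ε) (h1 : ε ≤ 1) :
    ∃ Γ : Matrix b b ℝ, Γ.IsSymm ∧ BonaFide ΩB Γ ∧
      gD - s * (gB + Γ)⁻¹ * sᵀ = σ + ε • (gD - σ - (1 / 2 : ℝ) • (s * gB⁻¹ * sᵀ)) := by
  have hgBp := hB.posDef hΩB hΩB2 hgB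
  obtain ⟨X, hX, hsX, hXM⟩ := exists_seed hΩD (hD.posDef hΩD hΩD2 hgD) hgBp hΩB2 hΩD2 r1 r2
    (hD.sub_posSemidef hΩD hgD) hle (by
      rw [cx_sub]
      convert hσu.sub_posSemidef hΩD hσ using 1
      abel)
  have hY : ((1 / 2 : ℝ) • gB⁻¹).PosDef := hgBp.inv.smul (by norm_num)
  have hZ : ((1 - ε) • X + ε • ((1 / 2 : ℝ) • gB⁻¹)).PosDef :=
    PosDef.posSemidef_add (hX.smul (sub_nonneg.2 h1)) (hY.smul h0)
  have hc := posSemidef_combo (hB.sub_posSemidef hΩB hgB) (cx_posSemidef hX).1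
    (cx_posSemidef hY.posSemidef).1 hXM (seed_half hΩB hΩB2 hgB hB) h0.le h1
  have e : (1 - ε) • cx X + ε • cx ((1 / 2 : ℝ) • gB⁻¹) =
      cx ((1 - ε) • X + ε • ((1 / 2 : ℝ) • gB⁻¹)) := by
    rw [cx_add, cx_smul (1 - ε), cx_smul ε, Complex.coe_smul, Complex.coe_smul]
  rw [e] at hc
  generalize hZe : (1 - ε) • X + ε • ((1 / 2 : ℝ) • gB⁻¹) = Z at *
  obtain ⟨k1, k2⟩ := bonaFide_inv_sub hgB hZ hc
  refine ⟨Z⁻¹ - gB, k1, k2, ?_⟩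
  have hu : IsUnit Z.det := isUnit_iff_ne_zero.2 hZ.det_pos.ne'
  rw [add_sub_cancel, Matrix.nonsing_inv_nonsing_inv _ hu, ← hZe]
  simp only [Matrix.mul_add, Matrix.add_mul, Matrix.smul_mul, Matrix.mul_smul, hsX]
  module

omit [DecidableEq d] in
/-- Conditional states are covariance matrices: the Schur complement of
`(γ + iΩ) + 0 ⊕ (Γ - iΩ) ⪰ 0`. -/
lemma bonaFide_schur (hΩB : ΩBᵀ = -ΩB) (hΩB2 : ΩB * ΩB = -1) (hgD : gD.IsSymm)
    (hgB : gB.IsSymm) (hB : BonaFide ΩB gB)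
    (h : BonaFide (fromBlocks ΩD 0 0 ΩB) (fromBlocks gD s sᵀ gB))
    {Γ : Matrix b b ℝ} (hΓ : Γ.IsSymm) (hΓu : BonaFide ΩB Γ) :
    (gD - s * (gB + Γ)⁻¹ * sᵀ).IsSymm ∧ BonaFide ΩD (gD - s * (gB + Γ)⁻¹ * sᵀ) ∧
      (gD - (gD - s * (gB + Γ)⁻¹ * sᵀ)).PosSemidef := by
  have hpd : (gB + Γ).PosDef := (hB.posDef hΩB hΩB2 hgB).add_posSemidef (hΓu.posSemidef hΩB hΓ)
  have hu : IsUnit (gB + Γ).det := isUnit_iff_ne_zero.2 hpd.det_pos.ne'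
  have hps : (s * (gB + Γ)⁻¹ * sᵀ).PosSemidef :=
    hpd.inv.posSemidef.mul_mul_conjTranspose_same s
  refine ⟨Matrix.IsSymm.sub hgD hps.1, ?_, by rwa [sub_sub_cancel]⟩
  have k0 : (fromBlocks (0 : Matrix d d ℂ) 0 0 (cx Γ - Complex.I • cx ΩB)).PosSemidef := by
    have := (hΓu.sub_posSemidef hΩB hΓ).conjTranspose_mul_mul_same
      (fromCols (0 : Matrix b d ℂ) (1 : Matrix b b ℂ))
    convert this using 1
    rw [conjTranspose_fromCols_eq_fromRows_conjTranspose, fromRows_mul, fromRows_mul_fromCols]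
    simp
  have k1 := PosSemidef.add h k0
  have e1 : cx (fromBlocks gD s sᵀ gB) + Complex.I • cx (fromBlocks ΩD 0 0 ΩB) +
      fromBlocks (0 : Matrix d d ℂ) 0 0 (cx Γ - Complex.I • cx ΩB) =
      fromBlocks (cx gD + Complex.I • cx ΩD) (cx s) (cx s)ᴴ (cx (gB + Γ)) := by
    rw [cx_conjTranspose, cx_add]
    ext (i | i) (j | j) <;> simp [cx]
  rw [e1] at k1
  have hcpd : (cx (gB + Γ)).PosDef := by
    have := cx_posSemidef hpd.posSemidef
    refine this.posDef_iff_det_ne_zero.2 fun h0 => ?_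
    have := congrArg det (show cx (gB + Γ) * cx (gB + Γ)⁻¹ = 1 by
      rw [← cx_mul, mul_nonsing_inv _ hu, cx_one])
    rw [det_mul, h0, zero_mul, det_one] at this
    exact zero_ne_one this
  have := hcpd.isUnit.invertible
  have k2 := (PosDef.fromBlocks₂₂ _ _ hcpd).1 k1
  have e2 : (cx (gB + Γ))⁻¹ = cx (gB + Γ)⁻¹ :=
    Matrix.inv_eq_right_inv (by rw [← cx_mul, mul_nonsing_inv _ hu, cx_one])
  rw [BonaFide, cx_sub, cx_mul, cx_mul]
  rw [e2, cx_conjTranspose] at k2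
  rw [sub_add_eq_add_sub]
  exact k2
end Measure
end Aux

/-! ### Decomposition of the phase space -/

section Partition
variable {A B C : Type*} [DecidableEq A] [DecidableEq B] [DecidableEq C]

omit [Fintype α] in
lemma symplecticForm_transpose : (symplecticForm α)ᵀ = -symplecticForm α := by
  ext ⟨i, a⟩ ⟨j, c⟩
  rcases eq_or_ne i j with rfl | h
  · fin_cases a <;> fin_cases c <;> simp [symplecticForm]
  · simp [symplecticForm, h, h.symm]

lemma symplecticForm_mul_self : symplecticForm α * symplecticForm α = -1 := by
  ext ⟨i, a⟩ ⟨j, c⟩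
  rw [mul_apply, Fintype.sum_prod_type]
  rcases eq_or_ne i j with rfl | h
  · fin_cases a <;> fin_cases c <;> simp [symplecticForm, Fin.sum_univ_two]
  · fin_cases a <;> fin_cases c <;> simp [symplecticForm, Fin.sum_univ_two, h]

lemma BonaFide.submatrix {m n : Type*} {Ω γ : Matrix m m ℝ} {Ω' : Matrix n n ℝ}
    (h : BonaFide Ω γ) (f : n → m) (hf : Ω.submatrix f f = Ω') :
    BonaFide Ω' (γ.submatrix f f) := by
  subst hf
  exact PosSemidef.submatrix h f

/-- The phase space of `A ⊕ (B ⊕ C)` regarded as that of `A ⊕ C` followed by that of `B`. -/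
noncomputable def splitEquiv (A B C : Type*) :
    (A ⊕ C) × Fin 2 ⊕ B × Fin 2 ≃ (A ⊕ (B ⊕ C)) × Fin 2 :=
  Equiv.ofBijective
    (Sum.elim (fun p => (Sum.map id Sum.inr p.1, p.2)) (fun p => (Sum.inr (Sum.inl p.1), p.2))) <| by
    constructor
    · rintro (⟨a | a, i⟩ | ⟨a, i⟩) (⟨c | c, j⟩ | ⟨c, j⟩) <;> simp
    · rintro ⟨a | b | c, i⟩
      · exact ⟨Sum.inl (Sum.inl a, i), rfl⟩
      · exact ⟨Sum.inr (b, i), rfl⟩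
      · exact ⟨Sum.inl (Sum.inr c, i), rfl⟩

omit [DecidableEq A] [DecidableEq B] [DecidableEq C] in
lemma splitEquiv_inl (p : (A ⊕ C) × Fin 2) :
    splitEquiv A B C (Sum.inl p) = (Sum.map id Sum.inr p.1, p.2) := rfl

omit [DecidableEq A] [DecidableEq B] [DecidableEq C] in
lemma splitEquiv_inr (p : B × Fin 2) :
    splitEquiv A B C (Sum.inr p) = (Sum.inr (Sum.inl p.1), p.2) := rfl

lemma symplecticForm_split :
    (symplecticForm (A ⊕ (B ⊕ C))).submatrix (splitEquiv A B C) (splitEquiv A B C) =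
      fromBlocks (symplecticForm (A ⊕ C)) 0 0 (symplecticForm B) := by
  ext (⟨a | a, i⟩ | ⟨a, i⟩) (⟨c | c, j⟩ | ⟨c, j⟩) <;>
    simp [splitEquiv_inl, splitEquiv_inr, symplecticForm]

lemma symplecticForm_blkA :
    (symplecticForm (A ⊕ C)).submatrix (fun p : A × Fin 2 => (Sum.inl p.1, p.2))
      (fun p : A × Fin 2 => (Sum.inl p.1, p.2)) = symplecticForm A := by
  ext ⟨i, a⟩ ⟨j, c⟩
  simp [symplecticForm]

/-- Reduced states of covariance matrices have determinant at least one. -/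
lemma one_le_det_blkA {σ : Matrix ((α ⊕ β) × Fin 2) ((α ⊕ β) × Fin 2) ℝ} (hσ : σ.IsSymm)
    (h : Uncertainty σ) : (blkA σ).PosDef ∧ 1 ≤ (blkA σ).det := by
  have hu : BonaFide (symplecticForm α) (blkA σ) :=
    BonaFide.submatrix h _ symplecticForm_blkA
  have hs : (blkA σ).IsSymm := hσ.submatrix _
  have hpd := hu.posDef symplecticForm_transpose symplecticForm_mul_self hs
  refine ⟨hpd, ?_⟩
  obtain ⟨τ, hτ, hτu, hτd, hle⟩ :=
    hu.exists_pure_le symplecticForm_transpose symplecticForm_mul_self hs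
  have := (det_le_of_le (hτu.posDef symplecticForm_transpose symplecticForm_mul_self hτ) hle).1
  rwa [hτd] at this

end Partition

lemma exists_log_det_lt {n : Type*} [Fintype n] [DecidableEq n] {P Q : Matrix n n ℝ}
    (hP : 0 < P.det) {η : ℝ} (hη : 0 < η) :
    ∃ ε : ℝ, 0 < ε ∧ ε ≤ 1 ∧ Real.log (P + ε • Q).det < Real.log P.det + η := by
  have hc : ContinuousAt (fun ε : ℝ => Real.log (P + ε • Q).det) 0 := by
    refine ContinuousAt.log ?_ (by simpa using hP.ne')
    refine Continuous.continuousAt ?_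
    exact Continuous.matrix_det (by fun_prop)
  have h1 : ∀ᶠ ε in nhds (0 : ℝ), Real.log (P + ε • Q).det < Real.log P.det + η := by
    refine hc.eventually_lt continuousAt_const ?_
    simpa using hη
  have h2 := h1.filter_mono (nhdsWithin_le_nhds (s := Set.Ioi 0))
  obtain ⟨ε, h3, h4, h5⟩ := (h2.and (Ioc_mem_nhdsGT (zero_lt_one' ℝ))).exists
  exact ⟨ε, h4, h5, h3⟩

/-- **Koashi–Winter relation for Gaussian Rényi-2 correlations.**  For a pure
tripartite covariance matrix `γ_{ABC}` (real symmetric, `γ + iΩ ⪰ 0`,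
`det γ = 1`), the Rényi-2 entropy of subsystem `A` decomposes as
`(1/2) ln det γ_A = J₂(γ_{A|B}) + E₂(γ_{A:C})`, where `γ_{AB}` and `γ_{AC}`
are the corresponding reduced covariance matrices. -/
theorem renyi2_koashi_winter (nA nB nC : ℕ)
    (γ : Matrix ((Fin nA ⊕ (Fin nB ⊕ Fin nC)) × Fin 2)
                ((Fin nA ⊕ (Fin nB ⊕ Fin nC)) × Fin 2) ℝ)
    (hsym : γ.IsSymm) (hunc : Uncertainty γ) (hpure : γ.det = 1) :
    (1/2) * Real.log
        (γ.submatrix (fun p : Fin nA × Fin 2 => (Sum.inl p.1, p.2))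
          (fun p : Fin nA × Fin 2 => (Sum.inl p.1, p.2))).det =
      J2 (γ.submatrix
            (fun p : (Fin nA ⊕ Fin nB) × Fin 2 => (Sum.map id Sum.inl p.1, p.2))
            (fun p : (Fin nA ⊕ Fin nB) × Fin 2 => (Sum.map id Sum.inl p.1, p.2)))
      + E2 (γ.submatrix
            (fun p : (Fin nA ⊕ Fin nC) × Fin 2 => (Sum.map id Sum.inr p.1, p.2))
            (fun p : (Fin nA ⊕ Fin nC) × Fin 2 => (Sum.map id Sum.inr p.1, p.2))) := by
  -- the blocks of `γ` with respect to `(A ⊕ C) ⊕ B`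
  set fD : (Fin nA ⊕ Fin nC) × Fin 2 → (Fin nA ⊕ (Fin nB ⊕ Fin nC)) × Fin 2 :=
    fun p => (Sum.map id Sum.inr p.1, p.2) with hfD
  set fB : Fin nB × Fin 2 → (Fin nA ⊕ (Fin nB ⊕ Fin nC)) × Fin 2 :=
    fun p => (Sum.inr (Sum.inl p.1), p.2) with hfB
  set ΩD := symplecticForm (Fin nA ⊕ Fin nC) with hΩDe
  set ΩB := symplecticForm (Fin nB) with hΩBe
  set gD := γ.submatrix fD fD with hgDe
  set gB := γ.submatrix fB fB with hgBe
  set s := γ.submatrix fD fB with hse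
  have hΩD : ΩDᵀ = -ΩD := symplecticForm_transpose
  have hΩD2 : ΩD * ΩD = -1 := symplecticForm_mul_self
  have hΩB : ΩBᵀ = -ΩB := symplecticForm_transpose
  have hΩB2 : ΩB * ΩB = -1 := symplecticForm_mul_self
  have hgD : gD.IsSymm := hsym.submatrix _
  have hgB : gB.IsSymm := hsym.submatrix _
  have hγs : γ.submatrix (splitEquiv _ _ _) (splitEquiv _ _ _) = fromBlocks gD s sᵀ gB := by
    ext (i | i) (j | j)
    · rfl
    · rfl
    · exact hsym.apply _ _
    · rfl
  have hsplit : BonaFide (fromBlocks ΩD 0 0 ΩB) (fromBlocks gD s sᵀ gB) := by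
    rw [← hγs]; exact BonaFide.submatrix hunc _ symplecticForm_split
  have hD : BonaFide ΩD gD := BonaFide.submatrix hsplit Sum.inl rfl
  have hB : BonaFide ΩB gB := BonaFide.submatrix hsplit Sum.inr rfl
  -- the block form of `γ Ω γ = Ω`
  have hblk : fromBlocks gD s sᵀ gB * fromBlocks ΩD 0 0 ΩB * fromBlocks gD s sᵀ gB =
      fromBlocks ΩD 0 0 ΩB := by
    rw [← hγs, ← symplecticForm_split, submatrix_mul_equiv, submatrix_mul_equiv,
      BonaFide.mul_mul_of_det symplecticForm_transpose symplecticForm_mul_self hsym hunc hpure]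
  rw [fromBlocks_multiply, fromBlocks_multiply, fromBlocks_inj] at hblk
  simp only [Matrix.mul_zero, add_zero, zero_add] at hblk
  obtain ⟨r1, r2, -, -⟩ := hblk
  set γAB := γ.submatrix
    (fun p : (Fin nA ⊕ Fin nB) × Fin 2 => (Sum.map id Sum.inl p.1, p.2))
    (fun p : (Fin nA ⊕ Fin nB) × Fin 2 => (Sum.map id Sum.inl p.1, p.2)) with hAB
  -- the conditional state of `A` is the reduction of the conditional state of `A ⊕ C`
  have hcond : ∀ Γ : Matrix (Fin nB × Fin 2) (Fin nB × Fin 2) ℝ,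
      blkA γAB - offAB γAB * (blkB γAB + Γ)⁻¹ * (offAB γAB)ᵀ =
        blkA (gD - s * (gB + Γ)⁻¹ * sᵀ) := fun Γ => rfl
  have hAA : γ.submatrix (fun p : Fin nA × Fin 2 => (Sum.inl p.1, p.2))
          (fun p : Fin nA × Fin 2 => (Sum.inl p.1, p.2)) = blkA γAB := rfl
  have hAD : blkA γAB = blkA gD := rfl
  rw [hAA, J2, E2]
  simp only [hcond]
  simp only [hAD]
  obtain ⟨-, hA1⟩ := one_le_det_blkA hgD hD
  set a := (1 / 2) * Real.log (blkA gD).det with ha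
  set J := {x | ∃ Γ : Matrix (Fin nB × Fin 2) (Fin nB × Fin 2) ℝ,
    Γ.IsSymm ∧ Uncertainty Γ ∧ x = (1/2) * Real.log ((blkA gD).det /
      (blkA (gD - s * (gB + Γ)⁻¹ * sᵀ)).det)} with hJ
  set E := {x | ∃ σ : Matrix ((Fin nA ⊕ Fin nC) × Fin 2) ((Fin nA ⊕ Fin nC) × Fin 2) ℝ,
    σ.IsSymm ∧ Uncertainty σ ∧ σ.det = 1 ∧ (gD - σ).PosSemidef ∧
    x = (1/2) * Real.log (blkA σ).det} with hE
  -- every measurement is matched by a pure state below the conditional state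
  have key1 : ∀ x ∈ J, ∃ y ∈ E, x ≤ a - y := by
    rintro x ⟨Γ, hΓ, hΓu, rfl⟩
    obtain ⟨k1, k2, k3⟩ := bonaFide_schur hΩB hΩB2 hgD hgB hB hsplit hΓ hΓu
    generalize gD - s * (gB + Γ)⁻¹ * sᵀ = S at *
    obtain ⟨σ, hσ, hσu, hσd, hle⟩ := k2.exists_pure_le hΩD hΩD2 k1
    refine ⟨_, ⟨σ, hσ, hσu, hσd, ?_, rfl⟩, ?_⟩
    · have := k3.add hle
      rwa [sub_add_sub_cancel] at this
    · obtain ⟨hσp, hσ1⟩ := one_le_det_blkA hσ hσu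
      have hSσ : (blkA S - blkA σ).PosSemidef := hle.submatrix _
      have hdet := (det_le_of_le hσp hSσ).1
      have hS1 := (one_le_det_blkA k1 k2).2
      rw [Real.log_div (by linarith) (by linarith)]
      have := Real.log_le_log (by linarith) hdet
      linarith
  -- every pure state below `γ_AC` is approached by conditional states
  have key2 : ∀ y ∈ E, ∀ η > 0, ∃ x ∈ J, a - y - η < x := by
    rintro y ⟨σ, hσ, hσu, hσd, hle, rfl⟩ η hη
    obtain ⟨hσp, hσ1⟩ := one_le_det_blkA hσ hσu
    obtain ⟨ε, h0, h1, hlt⟩ := exists_log_det_lt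
      (Q := blkA (gD - σ - (1 / 2 : ℝ) • (s * gB⁻¹ * sᵀ))) hσp.det_pos (mul_pos two_pos hη)
    obtain ⟨Γ, hΓ, hΓu, he⟩ := exists_measurement hΩD hΩD2 hΩB hΩB2 hgD hgB hD hB r1 r2
      hσ hσu hle h0 h1
    refine ⟨_, ⟨Γ, hΓ, hΓu, rfl⟩, ?_⟩
    obtain ⟨k1, k2, -⟩ := bonaFide_schur hΩB hΩB2 hgD hgB hB hsplit hΓ hΓu
    have hS1 := (one_le_det_blkA k1 k2).2
    rw [Real.log_div (by linarith) (by linarith), he]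
    change Real.log (blkA (σ + ε • (gD - σ - (1 / 2 : ℝ) • (s * gB⁻¹ * sᵀ)))).det < _ at hlt
    linarith
  have hEne : E.Nonempty := by
    obtain ⟨σ, h1, h2, h3, h4⟩ := hD.exists_pure_le hΩD hΩD2 hgD
    exact ⟨_, σ, h1, h2, h3, h4, rfl⟩
  have hEbd : BddBelow E := by
    refine ⟨0, ?_⟩
    rintro y ⟨σ, hσ, hσu, -, -, rfl⟩
    have := Real.log_nonneg (one_le_det_blkA hσ hσu).2
    linarith
  have hJne : J.Nonempty := by
    obtain ⟨y, hy⟩ := hEne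
    obtain ⟨x, hx, -⟩ := key2 y hy 1 one_pos
    exact ⟨x, hx⟩
  have hsup : sSup J = a - sInf E := by
    refine csSup_eq_of_forall_le_of_forall_lt_exists_gt hJne (fun x hx => ?_) fun w hw => ?_
    · obtain ⟨y, hy, hxy⟩ := key1 x hx
      linarith [csInf_le hEbd hy]
    · obtain ⟨y, hy, hyw⟩ := exists_lt_of_csInf_lt hEne (show sInf E < a - w by linarith)
      obtain ⟨x, hx, hlt⟩ := key2 y hy (a - w - y) (by linarith)
      exact ⟨x, hx, by linarith⟩
  rw [hsup]; ring
end

section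
/- Let γ_{AB} be any two-mode covariance matrix (4×4 real symmetric with γ_{AB} + iΩ₂ positive semidefinite), with blocks γ_{AB} = [[γ_A, ς],[ςᵀ, γ_B]] where A and B are single modes. Then the Gaussian Rényi-2 one-way classical correlations exceed the Gaussian Rényi-2 entanglement: J₂(γ_{A|B}) ≥ E₂(γ_{A:B}). -/
/-!
Both quantities are invariant under local symplectic transformations (`E2_congr`, `J2_congr`), and
such a transformation brings a two-mode covariance matrix to a standard form without correlations
between positions and momenta: `γ = Q ⊕ P` with `Q = [[a, c], [c, b]]` and `P = [[a, d], [d, b]]`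
(`exists_normal_form`). The quantity `(1/2) ln (a b / (a b - c²))` then separates the two sides.

* The uncertainty relation for `γ` says `P ≥ Q⁻¹`, so the pure covariance matrix `σ = Q ⊕ Q⁻¹`
  satisfies `σ ≤ γ`. As `det σ_A = Q₁₁ (Q⁻¹)₁₁ = a b / det Q`, this bounds `E2 γ` from above
  (`E2_xp`).
* Measuring `B` with the squeezed seed `diag(t, 1/t)` and letting `t → 0⁺` (homodyne detection of
  the position) leaves the conditional matrix `diag(a - c²/b, a)` on `A`, and
  `a² / ((a - c²/b) a) = a b / (a b - c²)`. This bounds `J2 γ` from below (`J2_xp`).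

The infimum and supremum are taken in `ℝ`, so the first step also needs `det σ_A ≥ 1`, and the
second a uniform positive lower bound on the conditional determinants.
-/

open Matrix
open scoped ComplexOrder

variable {α β : Type*} [Fintype α] [Fintype β] [DecidableEq α] [DecidableEq β]

set_option linter.unusedSectionVars false

/-! ### The uncertainty relation as a real quadratic inequality -/

theorem symplecticForm_transpose_s12 (ι : Type*) [DecidableEq ι] :
    (symplecticForm ι)ᵀ = -symplecticForm ι := by
  ext ⟨p, i⟩ ⟨q, j⟩
  fin_cases i <;> fin_cases j <;> simp [symplecticForm, eq_comm] <;> split_ifs <;> simp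

theorem symplecticForm_mul_self_s12 (ι : Type*) [Fintype ι] [DecidableEq ι] :
    symplecticForm ι * symplecticForm ι = -1 := by
  ext ⟨p, i⟩ ⟨q, j⟩
  rw [Matrix.mul_apply, Fintype.sum_prod_type]
  simp only [Fin.sum_univ_two]
  fin_cases i <;> fin_cases j <;>
    simp [symplecticForm, Matrix.one_apply] <;> split_ifs <;> simp

/-- Evaluating `γ + iΩ` on `u + iv` turns the complex condition into a real one; the
imaginary part of the form vanishes because `γ + iΩ` is Hermitian. -/
theorem uncertainty_iff {ι : Type*} [Fintype ι] [DecidableEq ι]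
    {γ : Matrix (ι × Fin 2) (ι × Fin 2) ℝ} (h : γ.IsSymm) :
    Uncertainty γ ↔ ∀ u v : ι × Fin 2 → ℝ,
      u ⬝ᵥ symplecticForm ι *ᵥ v - v ⬝ᵥ symplecticForm ι *ᵥ u ≤ u ⬝ᵥ γ *ᵥ u + v ⬝ᵥ γ *ᵥ v := by
  have herm : (γ.map Complex.ofReal +
      Complex.I • (symplecticForm ι).map Complex.ofReal).IsHermitian := by
    ext p q
    have h1 : γ q p = γ p q := h.apply p q
    have h2 : symplecticForm ι q p = -symplecticForm ι p q :=
      congrFun (congrFun (symplecticForm_transpose_s12 ι) p) q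
    simp [h1, h2]
  have key : ∀ z : ι × Fin 2 → ℂ, (star z ⬝ᵥ (γ.map Complex.ofReal +
      Complex.I • (symplecticForm ι).map Complex.ofReal) *ᵥ z).re =
      (fun p => (z p).re) ⬝ᵥ γ *ᵥ (fun p => (z p).re)
      + (fun p => (z p).im) ⬝ᵥ γ *ᵥ (fun p => (z p).im)
      - ((fun p => (z p).re) ⬝ᵥ symplecticForm ι *ᵥ (fun p => (z p).im)
        - (fun p => (z p).im) ⬝ᵥ symplecticForm ι *ᵥ (fun p => (z p).re)) := by
    intro z
    simp only [dotProduct, Matrix.mulVec, Finset.mul_sum, Complex.re_sum,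
      ← Finset.sum_add_distrib, ← Finset.sum_sub_distrib]
    refine Finset.sum_congr rfl fun p _ => Finset.sum_congr rfl fun q _ => ?_
    simp
    ring
  unfold Uncertainty
  constructor
  · intro H u v
    have h1 := H.dotProduct_mulVec_nonneg (fun p => ⟨u p, v p⟩)
    have h2 := (Complex.le_def.1 h1).1
    rw [key] at h2
    simp only [Complex.zero_re] at h2
    linarith
  · intro H
    refine Matrix.PosSemidef.of_dotProduct_mulVec_nonneg herm fun z => ?_
    rw [Complex.le_def]
    refine ⟨?_, ?_⟩
    · rw [key]
      have := H (fun p => (z p).re) (fun p => (z p).im)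
      simp only [Complex.zero_re]
      linarith
    · exact (herm.im_star_dotProduct_mulVec_self z).symm

/-! ### Symplectic congruence -/

/-- `S` is a real symplectic matrix, in the convention `S Ω Sᵀ = Ω`. -/
def Sp {ι : Type*} [Fintype ι] [DecidableEq ι] (S : Matrix (ι × Fin 2) (ι × Fin 2) ℝ) : Prop :=
  S * symplecticForm ι * Sᵀ = symplecticForm ι

section Sp
variable {ι : Type*} [Fintype ι] [DecidableEq ι] {S : Matrix (ι × Fin 2) (ι × Fin 2) ℝ}

theorem Sp.det_sq (hS : Sp S) : S.det * S.det = 1 := by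
  have h0 : (symplecticForm ι).det ≠ 0 := by
    intro h
    have := congrArg Matrix.det (symplecticForm_mul_self_s12 ι)
    rw [Matrix.det_mul, h, Matrix.det_neg, Matrix.det_one] at this
    simp at this
  have := congrArg Matrix.det hS
  rw [Matrix.det_mul, Matrix.det_mul, Matrix.det_transpose] at this
  apply mul_right_cancel₀ h0
  linarith

theorem Sp.isUnit (hS : Sp S) : IsUnit S.det := IsUnit.of_mul_eq_one _ hS.det_sq

theorem Sp.inv (hS : Sp S) : Sp S⁻¹ := by
  have h := hS.isUnit
  have h' : IsUnit (Sᵀ).det := by rwa [Matrix.det_transpose]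
  unfold Sp
  conv_lhs => rw [← (show S * symplecticForm ι * Sᵀ = symplecticForm ι from hS)]
  rw [Matrix.transpose_nonsing_inv, Matrix.mul_assoc S, Matrix.nonsing_inv_mul_cancel_left _ _ h,
    Matrix.mul_nonsing_inv_cancel_right _ _ h']

theorem Sp.det_congr (hS : Sp S) (M : Matrix (ι × Fin 2) (ι × Fin 2) ℝ) :
    (S * M * Sᵀ).det = M.det := by
  rw [Matrix.det_mul, Matrix.det_mul, Matrix.det_transpose]
  linear_combination M.det * hS.det_sq

theorem isSymm_congr {M : Matrix (ι × Fin 2) (ι × Fin 2) ℝ} (hM : M.IsSymm) :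
    (S * M * Sᵀ).IsSymm := by
  unfold Matrix.IsSymm
  rw [Matrix.transpose_mul, Matrix.transpose_mul, hM.eq, Matrix.transpose_transpose,
    Matrix.mul_assoc]

theorem posSemidef_congr {M : Matrix (ι × Fin 2) (ι × Fin 2) ℝ} (hM : M.PosSemidef) :
    (S * M * Sᵀ).PosSemidef := by
  simpa using hM.mul_mul_conjTranspose_same S

theorem Sp.uncertainty (hS : Sp S) {M : Matrix (ι × Fin 2) (ι × Fin 2) ℝ} (hM : Uncertainty M) :
    Uncertainty (S * M * Sᵀ) := by
  have h := Matrix.PosSemidef.mul_mul_conjTranspose_same hM (S.map Complex.ofReal)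
  have e1 : (S.map Complex.ofReal)ᴴ = (Sᵀ).map Complex.ofReal := by
    ext i j; simp
  have e2 : ∀ X Y : Matrix (ι × Fin 2) (ι × Fin 2) ℝ,
      X.map Complex.ofReal * Y.map Complex.ofReal = (X * Y).map Complex.ofReal :=
    fun X Y => (Matrix.map_mul (f := Complex.ofRealHom)).symm
  rw [e1, Matrix.mul_add, Matrix.add_mul, Matrix.mul_smul, Matrix.smul_mul, e2, e2, e2, e2,
    show S * symplecticForm ι * Sᵀ = symplecticForm ι from hS] at h
  exact h

end Sp

/-! ### Bipartite block matrices and local symplectic invariance -/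

/-- The bipartite matrix `[[A, C], [C', B]]`, with the index type rearranged from
`α × Fin 2 ⊕ β × Fin 2` to `(α ⊕ β) × Fin 2`. -/
def mkAB (A : Matrix (α × Fin 2) (α × Fin 2) ℝ) (C : Matrix (α × Fin 2) (β × Fin 2) ℝ)
    (C' : Matrix (β × Fin 2) (α × Fin 2) ℝ)
    (B : Matrix (β × Fin 2) (β × Fin 2) ℝ) : Matrix ((α ⊕ β) × Fin 2) ((α ⊕ β) × Fin 2) ℝ :=
  (Matrix.fromBlocks A C C' B).submatrix (Equiv.sumProdDistrib α β (Fin 2))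
    (Equiv.sumProdDistrib α β (Fin 2))

theorem mkAB_mul (A : Matrix (α × Fin 2) (α × Fin 2) ℝ) (C : Matrix (α × Fin 2) (β × Fin 2) ℝ)
    (C' : Matrix (β × Fin 2) (α × Fin 2) ℝ) (B : Matrix (β × Fin 2) (β × Fin 2) ℝ)
    (A₁ : Matrix (α × Fin 2) (α × Fin 2) ℝ) (C₁ : Matrix (α × Fin 2) (β × Fin 2) ℝ)
    (C₁' : Matrix (β × Fin 2) (α × Fin 2) ℝ) (B₁ : Matrix (β × Fin 2) (β × Fin 2) ℝ) :
    mkAB A C C' B * mkAB A₁ C₁ C₁' B₁ =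
      mkAB (A * A₁ + C * C₁') (A * C₁ + C * B₁) (C' * A₁ + B * C₁') (C' * C₁ + B * B₁) := by
  unfold mkAB
  rw [Matrix.submatrix_mul_equiv, Matrix.fromBlocks_multiply]

theorem mkAB_transpose (A : Matrix (α × Fin 2) (α × Fin 2) ℝ) (C : Matrix (α × Fin 2) (β × Fin 2) ℝ)
    (C' : Matrix (β × Fin 2) (α × Fin 2) ℝ) (B : Matrix (β × Fin 2) (β × Fin 2) ℝ) :
    (mkAB A C C' B)ᵀ = mkAB Aᵀ C'ᵀ Cᵀ Bᵀ := by
  unfold mkAB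
  rw [Matrix.transpose_submatrix, Matrix.fromBlocks_transpose]


theorem blkA_mkAB (A : Matrix (α × Fin 2) (α × Fin 2) ℝ) (C : Matrix (α × Fin 2) (β × Fin 2) ℝ)
    (C' : Matrix (β × Fin 2) (α × Fin 2) ℝ) (B : Matrix (β × Fin 2) (β × Fin 2) ℝ) :
    blkA (mkAB A C C' B) = A := rfl

theorem blkB_mkAB (A : Matrix (α × Fin 2) (α × Fin 2) ℝ) (C : Matrix (α × Fin 2) (β × Fin 2) ℝ)
    (C' : Matrix (β × Fin 2) (α × Fin 2) ℝ) (B : Matrix (β × Fin 2) (β × Fin 2) ℝ) :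
    blkB (mkAB A C C' B) = B := rfl

theorem offAB_mkAB (A : Matrix (α × Fin 2) (α × Fin 2) ℝ) (C : Matrix (α × Fin 2) (β × Fin 2) ℝ)
    (C' : Matrix (β × Fin 2) (α × Fin 2) ℝ) (B : Matrix (β × Fin 2) (β × Fin 2) ℝ) :
    offAB (mkAB A C C' B) = C := rfl

theorem eq_mkAB {γ : Matrix ((α ⊕ β) × Fin 2) ((α ⊕ β) × Fin 2) ℝ} (h : γ.IsSymm) :
    γ = mkAB (blkA γ) (offAB γ) (offAB γ)ᵀ (blkB γ) := by
  ext ⟨p, i⟩ ⟨q, j⟩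
  rcases p with p | p <;> rcases q with q | q <;> try rfl
  exact h.apply _ _

theorem symplecticForm_eq_mkAB :
    symplecticForm (α ⊕ β) = mkAB (symplecticForm α) 0 0 (symplecticForm β) := by
  ext ⟨p, i⟩ ⟨q, j⟩
  rcases p with p | p <;> rcases q with q | q <;>
    simp [symplecticForm, mkAB, Equiv.sumProdDistrib]

theorem Sp.directSum {SA : Matrix (α × Fin 2) (α × Fin 2) ℝ} {SB : Matrix (β × Fin 2) (β × Fin 2) ℝ}
    (hA : Sp SA) (hB : Sp SB) : Sp (mkAB SA 0 0 SB) := by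
  unfold Sp
  rw [symplecticForm_eq_mkAB, mkAB_transpose, mkAB_mul, mkAB_mul]
  simp [show SA * symplecticForm α * SAᵀ = symplecticForm α from hA,
    show SB * symplecticForm β * SBᵀ = symplecticForm β from hB]

theorem directSum_congr (SA : Matrix (α × Fin 2) (α × Fin 2) ℝ) (SB : Matrix (β × Fin 2) (β × Fin 2) ℝ)
    {γ : Matrix ((α ⊕ β) × Fin 2) ((α ⊕ β) × Fin 2) ℝ} (h : γ.IsSymm) :
    mkAB SA 0 0 SB * γ * (mkAB SA 0 0 SB)ᵀ =
      mkAB (SA * blkA γ * SAᵀ) (SA * offAB γ * SBᵀ) (SA * offAB γ * SBᵀ)ᵀ (SB * blkB γ * SBᵀ) := by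
  conv_lhs => rw [eq_mkAB h]
  rw [mkAB_transpose, mkAB_mul, mkAB_mul]
  simp [Matrix.mul_assoc]

/-- Congruence by the local symplectic `SA⁻¹ ⊕ SB⁻¹` undoes congruence by `SA ⊕ SB`, so that
inclusions valid for every local symplectic become equalities. -/
theorem directSum_congr_inv {SA : Matrix (α × Fin 2) (α × Fin 2) ℝ}
    {SB : Matrix (β × Fin 2) (β × Fin 2) ℝ} (hA : Sp SA) (hB : Sp SB)
    (γ : Matrix ((α ⊕ β) × Fin 2) ((α ⊕ β) × Fin 2) ℝ) :
    mkAB SA⁻¹ 0 0 SB⁻¹ * (mkAB SA 0 0 SB * γ * (mkAB SA 0 0 SB)ᵀ) * (mkAB SA⁻¹ 0 0 SB⁻¹)ᵀ = γ := by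
  have h1 : mkAB SA⁻¹ 0 0 SB⁻¹ * mkAB SA 0 0 SB = 1 := by
    rw [mkAB_mul, Matrix.nonsing_inv_mul _ hA.isUnit, Matrix.nonsing_inv_mul _ hB.isUnit]
    simp [mkAB]
  have h2 : (mkAB SA 0 0 SB)ᵀ * (mkAB SA⁻¹ 0 0 SB⁻¹)ᵀ = 1 := by
    rw [← Matrix.transpose_mul, h1, Matrix.transpose_one]
  calc _ = (mkAB SA⁻¹ 0 0 SB⁻¹ * mkAB SA 0 0 SB) * γ *
        ((mkAB SA 0 0 SB)ᵀ * (mkAB SA⁻¹ 0 0 SB⁻¹)ᵀ) := by simp only [Matrix.mul_assoc]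
    _ = γ := by rw [h1, h2, Matrix.one_mul, Matrix.mul_one]

/-- The values `(1/2) ln det σ_A` whose infimum is `E2 γ`. -/
def E2Set (γ : Matrix ((α ⊕ β) × Fin 2) ((α ⊕ β) × Fin 2) ℝ) : Set ℝ :=
  {x | ∃ σ : Matrix ((α ⊕ β) × Fin 2) ((α ⊕ β) × Fin 2) ℝ,
    σ.IsSymm ∧ Uncertainty σ ∧ σ.det = 1 ∧ (γ - σ).PosSemidef ∧
    x = (1/2) * Real.log (blkA σ).det}

/-- The values whose supremum is `J2 γ`. -/
def J2Set (γ : Matrix ((α ⊕ β) × Fin 2) ((α ⊕ β) × Fin 2) ℝ) : Set ℝ :=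
  {x | ∃ Γ : Matrix (β × Fin 2) (β × Fin 2) ℝ,
    Γ.IsSymm ∧ Uncertainty Γ ∧
    x = (1/2) * Real.log ((blkA γ).det /
      (blkA γ - offAB γ * (blkB γ + Γ)⁻¹ * (offAB γ)ᵀ).det)}

section invariance
variable {SA : Matrix (α × Fin 2) (α × Fin 2) ℝ} {SB : Matrix (β × Fin 2) (β × Fin 2) ℝ}
  {γ : Matrix ((α ⊕ β) × Fin 2) ((α ⊕ β) × Fin 2) ℝ}

/-- A pure `σ ≤ γ` is carried to the pure matrix `S σ Sᵀ ≤ S γ Sᵀ`. -/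
theorem E2Set_subset (hA : Sp SA) (hB : Sp SB) :
    E2Set γ ⊆ E2Set (mkAB SA 0 0 SB * γ * (mkAB SA 0 0 SB)ᵀ) := by
  rintro x ⟨σ, h1, h2, h3, h4, rfl⟩
  refine ⟨mkAB SA 0 0 SB * σ * (mkAB SA 0 0 SB)ᵀ, isSymm_congr h1, (hA.directSum hB).uncertainty h2,
    by rw [(hA.directSum hB).det_congr, h3], ?_, ?_⟩
  · rw [← Matrix.sub_mul, ← Matrix.mul_sub]
    exact posSemidef_congr h4
  · rw [directSum_congr _ _ h1, blkA_mkAB, hA.det_congr]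

/-- The measurement seed `Γ` is carried to `SB Γ SBᵀ`; the conditional covariance matrix of `A`
then changes by congruence with `SA`. -/
theorem J2Set_subset (hA : Sp SA) (hB : Sp SB) (h : γ.IsSymm) :
    J2Set γ ⊆ J2Set (mkAB SA 0 0 SB * γ * (mkAB SA 0 0 SB)ᵀ) := by
  rintro x ⟨Γ, h1, h2, rfl⟩
  refine ⟨SB * Γ * SBᵀ, isSymm_congr h1, hB.uncertainty h2, ?_⟩
  have hu := hB.isUnit
  have hu' : IsUnit (SBᵀ).det := by rwa [Matrix.det_transpose]
  have key : SA * offAB γ * SBᵀ * (SB * blkB γ * SBᵀ + SB * Γ * SBᵀ)⁻¹ * (SA * offAB γ * SBᵀ)ᵀ =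
      SA * (offAB γ * (blkB γ + Γ)⁻¹ * (offAB γ)ᵀ) * SAᵀ := by
    rw [← Matrix.add_mul, ← Matrix.mul_add, Matrix.mul_inv_rev, Matrix.mul_inv_rev]
    simp only [Matrix.transpose_mul, Matrix.transpose_transpose, Matrix.mul_assoc]
    rw [Matrix.mul_nonsing_inv_cancel_left _ _ hu', Matrix.nonsing_inv_mul_cancel_left _ _ hu]
  rw [directSum_congr _ _ h, blkA_mkAB, blkB_mkAB, offAB_mkAB, key, ← Matrix.sub_mul, ← Matrix.mul_sub,
    hA.det_congr, hA.det_congr]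

theorem E2_congr (hA : Sp SA) (hB : Sp SB) :
    E2 (mkAB SA 0 0 SB * γ * (mkAB SA 0 0 SB)ᵀ) = E2 γ := by
  have h1 := E2Set_subset (γ := γ) hA hB
  have h2 := E2Set_subset (γ := mkAB SA 0 0 SB * γ * (mkAB SA 0 0 SB)ᵀ) hA.inv hB.inv
  rw [directSum_congr_inv hA hB] at h2
  exact congrArg sInf (h2.antisymm h1)

theorem J2_congr (hA : Sp SA) (hB : Sp SB) (h : γ.IsSymm) :
    J2 (mkAB SA 0 0 SB * γ * (mkAB SA 0 0 SB)ᵀ) = J2 γ := by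
  have h1 := J2Set_subset hA hB h
  have h2 := J2Set_subset hA.inv hB.inv (isSymm_congr (S := mkAB SA 0 0 SB) h)
  rw [directSum_congr_inv hA hB] at h2
  exact congrArg sSup (h2.antisymm h1)

end invariance

theorem Uncertainty.blkA {γ : Matrix ((α ⊕ β) × Fin 2) ((α ⊕ β) × Fin 2) ℝ}
    (h : Uncertainty γ) : Uncertainty (blkA γ) := by
  have e : symplecticForm α = _root_.blkA (symplecticForm (α ⊕ β)) := by
    rw [symplecticForm_eq_mkAB, blkA_mkAB]
  unfold Uncertainty
  rw [e]
  exact Matrix.PosSemidef.submatrix h (fun p : α × Fin 2 => (Sum.inl p.1, p.2))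

theorem Uncertainty.blkB {γ : Matrix ((α ⊕ β) × Fin 2) ((α ⊕ β) × Fin 2) ℝ}
    (h : Uncertainty γ) : Uncertainty (blkB γ) := by
  have e : symplecticForm β = _root_.blkB (symplecticForm (α ⊕ β)) := by
    rw [symplecticForm_eq_mkAB, blkB_mkAB]
  unfold Uncertainty
  rw [e]
  exact Matrix.PosSemidef.submatrix h (fun p : β × Fin 2 => (Sum.inr p.1, p.2))


/-! ### Single modes -/

/-- A `2 × 2` matrix regarded as acting on the phase space `Fin 1 × Fin 2` of one mode. -/
def up (R : Matrix (Fin 2) (Fin 2) ℝ) : Matrix (Fin 1 × Fin 2) (Fin 1 × Fin 2) ℝ :=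
  R.submatrix (Equiv.uniqueProd (Fin 2) (Fin 1)) (Equiv.uniqueProd (Fin 2) (Fin 1))

theorem up_mul (R T : Matrix (Fin 2) (Fin 2) ℝ) : up R * up T = up (R * T) :=
  Matrix.submatrix_mul_equiv _ _ _ _ _

theorem up_transpose (R : Matrix (Fin 2) (Fin 2) ℝ) : (up R)ᵀ = up Rᵀ := rfl
theorem up_add (R T : Matrix (Fin 2) (Fin 2) ℝ) : up R + up T = up (R + T) := rfl
theorem up_sub (R T : Matrix (Fin 2) (Fin 2) ℝ) : up R - up T = up (R - T) := rfl

theorem up_inv (R : Matrix (Fin 2) (Fin 2) ℝ) : (up R)⁻¹ = up R⁻¹ :=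
  Matrix.inv_submatrix_equiv _ _ _

theorem det_up (R : Matrix (Fin 2) (Fin 2) ℝ) : (up R).det = R.det :=
  Matrix.det_submatrix_equiv_self _ _

theorem exists_up (M : Matrix (Fin 1 × Fin 2) (Fin 1 × Fin 2) ℝ) :
    ∃ x y z w : ℝ, M = up !![x, y; z, w] := by
  refine ⟨M (0, 0) (0, 0), M (0, 0) (0, 1), M (0, 1) (0, 0), M (0, 1) (0, 1), ?_⟩
  ext ⟨p, i⟩ ⟨q, j⟩
  fin_cases p; fin_cases q; fin_cases i <;> fin_cases j <;> rfl

theorem exists_up_symm {M : Matrix (Fin 1 × Fin 2) (Fin 1 × Fin 2) ℝ} (h : M.IsSymm) :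
    ∃ x y z : ℝ, M = up !![x, y; y, z] := by
  obtain ⟨x, y, z, w, rfl⟩ := exists_up M
  have : y = z := h.apply (0, 1) (0, 0)
  exact ⟨x, y, w, by rw [this]⟩

theorem Sp.up {R : Matrix (Fin 2) (Fin 2) ℝ} (h : R.det = 1) : Sp (up R) := by
  have e : symplecticForm (Fin 1) = _root_.up !![0, 1; -1, 0] := by
    ext ⟨p, i⟩ ⟨q, j⟩
    fin_cases p; fin_cases q; fin_cases i <;> fin_cases j <;> simp [symplecticForm, _root_.up]
  rw [Matrix.det_fin_two] at h
  unfold Sp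
  rw [e, up_mul, up_transpose, up_mul]
  congr 1
  ext i j
  fin_cases i <;> fin_cases j <;> simp [Matrix.mul_apply, Fin.sum_univ_two] <;> linarith

theorem isSymm_up (x y z : ℝ) : (up !![x, y; y, z]).IsSymm := by
  ext ⟨p, i⟩ ⟨q, j⟩
  fin_cases p; fin_cases q; fin_cases i <;> fin_cases j <;> rfl

theorem uncertainty_up {x y z : ℝ} : Uncertainty (up !![x, y; y, z]) ↔
    ∀ u₁ u₂ v₁ v₂ : ℝ, 2 * (u₁ * v₂ - u₂ * v₁) ≤
      x * u₁ ^ 2 + 2 * y * u₁ * u₂ + z * u₂ ^ 2 + (x * v₁ ^ 2 + 2 * y * v₁ * v₂ + z * v₂ ^ 2) := by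
  rw [uncertainty_iff (isSymm_up x y z)]
  constructor
  · intro h u₁ u₂ v₁ v₂
    have := h (fun p => ![u₁, u₂] p.2) (fun p => ![v₁, v₂] p.2)
    simp [dotProduct, Matrix.mulVec, Fintype.sum_prod_type, Fin.sum_univ_two, symplecticForm, up] at this
    linarith
  · intro h u v
    have := h (u (0, 0)) (u (0, 1)) (v (0, 0)) (v (0, 1))
    simp [dotProduct, Matrix.mulVec, Fintype.sum_prod_type, Fin.sum_univ_two, symplecticForm, up]
    linarith

theorem uncertainty_up_pos {x y z : ℝ} (h : Uncertainty (up !![x, y; y, z])) :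
    0 < x ∧ 0 < z ∧ 1 ≤ x * z - y ^ 2 := by
  rw [uncertainty_up] at h
  have hx : 0 ≤ x := by have := h 1 0 0 0; linarith
  have hz : 0 ≤ z := by have := h 0 1 0 0; linarith
  have hx_pos : 0 < x := by
    rcases hx.lt_or_eq with h0 | h0
    · exact h0
    · have := h (z + 1) 0 0 1
      subst h0
      nlinarith
  have hz_pos : 0 < z := by
    rcases hz.lt_or_eq with h0 | h0
    · exact h0
    · have := h 1 0 0 (x + 1)
      subst h0
      nlinarith
  refine ⟨hx_pos, hz_pos, ?_⟩
  -- `(z, -y)` minimises the quadratic form over its second entry, with value `z (x z - y²)`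
  have h1 := h z (-y) 0 1
  have h2 : z * 1 ≤ z * (x * z - y ^ 2) := by nlinarith
  exact le_of_mul_le_mul_left h2 hz_pos

/-! ### Two-mode matrices without position-momentum correlations -/

/-- The two-mode matrix with position block `[[a, c], [c, b]]`, momentum block
`[[a', c'], [c', b']]`, and no correlations between positions and momenta. -/
def xp (a a' b b' c c' : ℝ) : Matrix ((Fin 1 ⊕ Fin 1) × Fin 2) ((Fin 1 ⊕ Fin 1) × Fin 2) ℝ :=
  mkAB (up !![a, 0; 0, a']) (up !![c, 0; 0, c']) (up !![c, 0; 0, c'])ᵀ (up !![b, 0; 0, b'])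

theorem isSymm_xp (a a' b b' c c' : ℝ) : (xp a a' b b' c c').IsSymm := by
  unfold xp Matrix.IsSymm
  rw [mkAB_transpose, (isSymm_up a _ _).eq, (isSymm_up b _ _).eq, Matrix.transpose_transpose]

theorem xp_form (a a' b b' c c' : ℝ) (u : (Fin 1 ⊕ Fin 1) × Fin 2 → ℝ) :
    u ⬝ᵥ xp a a' b b' c c' *ᵥ u =
      (a * u (.inl 0, 0) ^ 2 + 2 * c * u (.inl 0, 0) * u (.inr 0, 0) + b * u (.inr 0, 0) ^ 2) +
      (a' * u (.inl 0, 1) ^ 2 + 2 * c' * u (.inl 0, 1) * u (.inr 0, 1)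
        + b' * u (.inr 0, 1) ^ 2) := by
  simp [dotProduct, Matrix.mulVec, Fintype.sum_prod_type, Fin.sum_univ_two, up, xp, mkAB,
    Equiv.sumProdDistrib]
  ring

theorem posSemidef_xp {a a' b b' c c' : ℝ}
    (h : ∀ x y : ℝ, 0 ≤ a * x ^ 2 + 2 * c * x * y + b * y ^ 2)
    (hP : ∀ x y : ℝ, 0 ≤ a' * x ^ 2 + 2 * c' * x * y + b' * y ^ 2) :
    (xp a a' b b' c c').PosSemidef := by
  refine Matrix.PosSemidef.of_dotProduct_mulVec_nonneg (isSymm_xp _ _ _ _ _ _) fun u => ?_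
  simp only [star_trivial]
  rw [xp_form]
  exact add_nonneg (h _ _) (hP _ _)

/-- Without position-momentum correlations the uncertainty relation decouples: it suffices to
pair a position vector `(x, y)` with a momentum vector `(z, w)`. -/
theorem uncertainty_xp {a a' b b' c c' : ℝ} : Uncertainty (xp a a' b b' c c') ↔
    ∀ x y z w : ℝ, 2 * (x * z + y * w) ≤
      (a * x ^ 2 + 2 * c * x * y + b * y ^ 2) + (a' * z ^ 2 + 2 * c' * z * w + b' * w ^ 2) := by
  have hO : ∀ u v : (Fin 1 ⊕ Fin 1) × Fin 2 → ℝ, u ⬝ᵥ symplecticForm (Fin 1 ⊕ Fin 1) *ᵥ v =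
      u (.inl 0, 0) * v (.inl 0, 1) - u (.inl 0, 1) * v (.inl 0, 0) +
      (u (.inr 0, 0) * v (.inr 0, 1) - u (.inr 0, 1) * v (.inr 0, 0)) := by
    intro u v
    simp [dotProduct, Matrix.mulVec, Fintype.sum_prod_type, Fin.sum_univ_two, symplecticForm]
    ring
  rw [uncertainty_iff (isSymm_xp _ _ _ _ _ _)]
  constructor
  · intro h x y z w
    have := h (fun p => ![Sum.elim (fun _ => x) (fun _ => y) p.1, 0] p.2)
      (fun p => ![0, Sum.elim (fun _ => z) (fun _ => w) p.1] p.2)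
    simp only [hO, xp_form] at this
    simp at this
    linarith
  · intro h u v
    rw [hO, hO, xp_form, xp_form]
    have h1 := h (u (.inl 0, 0)) (u (.inr 0, 0)) (v (.inl 0, 1)) (v (.inr 0, 1))
    have h2 := h (-v (.inl 0, 0)) (-v (.inr 0, 0)) (u (.inl 0, 1)) (u (.inr 0, 1))
    linarith

/-- The matrix `Q ⊕ Q⁻¹` with `Q = [[a, c], [c, b]]` has determinant one. -/
theorem det_xp_pure {a b c : ℝ} (ha : 0 < a) (hb : 0 < b) (hD : 0 < a * b - c ^ 2) :
    (xp a (b / (a * b - c ^ 2)) b (a / (a * b - c ^ 2)) c (-c / (a * b - c ^ 2))).det = 1 := by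
  set D := a * b - c ^ 2 with hDdef
  have hAi : (!![a, 0; 0, b / D] : Matrix (Fin 2) (Fin 2) ℝ) * !![1 / a, 0; 0, D / b] = 1 := by
    ext i j
    fin_cases i <;> fin_cases j <;> simp [Matrix.mul_apply, Fin.sum_univ_two] <;> field_simp
  have hAi' : up !![a, 0; 0, b / D] * up !![1 / a, 0; 0, D / b] = 1 := by
    rw [up_mul, hAi]; exact Matrix.submatrix_one_equiv _
  let _ : Invertible (up !![a, 0; 0, b / D]) := ⟨_, mul_eq_one_comm.1 hAi', hAi'⟩
  have hinv : ⅟(up !![a, 0; 0, b / D]) = up !![1 / a, 0; 0, D / b] := rfl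
  -- Schur complement with respect to mode `A`; the determinants of the two factors are reciprocal.
  unfold xp mkAB
  rw [Matrix.det_submatrix_equiv_self, Matrix.det_fromBlocks₁₁, hinv, up_transpose, up_mul, up_mul,
    up_sub, det_up, det_up]
  simp [Matrix.det_fin_two, Matrix.mul_apply, Fin.sum_univ_two]
  field_simp
  rw [hDdef]


/-! ### Reduction to standard form -/

/-- Single-mode Williamson form. The diagonalising matrix is taken lower triangular, from the
Cholesky factorisation, and `a` is the symplectic eigenvalue `√det`. -/
theorem exists_scale {x y z : ℝ} (hx : 0 < x) (hg : 1 ≤ x * z - y ^ 2) :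
    ∃ (R : Matrix (Fin 2) (Fin 2) ℝ) (a : ℝ), R.det = 1 ∧
      R * !![x, y; y, z] * Rᵀ = !![a, 0; 0, a] := by
  obtain ⟨a, ha, ha2⟩ : ∃ a : ℝ, 0 < a ∧ a ^ 2 = x * z - y ^ 2 :=
    ⟨√(x * z - y ^ 2), Real.sqrt_pos.2 (by linarith), Real.sq_sqrt (by linarith)⟩
  obtain ⟨s, hs, hs2⟩ : ∃ s : ℝ, 0 < s ∧ a = s ^ 2 * x :=
    ⟨√(a / x), Real.sqrt_pos.2 (by positivity), by
      rw [Real.sq_sqrt (by positivity)]; field_simp⟩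
  have hz : z = (s ^ 4 * x ^ 2 + y ^ 2) / x := by
    field_simp
    rw [hs2] at ha2
    linarith
  refine ⟨!![s, 0; -y / (s * x), 1 / s], a, ?_, ?_⟩
  · rw [Matrix.det_fin_two]
    simp
    field_simp
  · rw [hs2, hz]
    ext i j
    fin_cases i <;> fin_cases j <;> simp [Fin.sum_univ_two, Matrix.mul_apply] <;> field_simp <;> ring_nf <;> simp

/-- Every vector of the plane can be rotated onto the first axis. -/
theorem exists_angle (x y : ℝ) : ∃ t : ℝ, Real.sin t * x + Real.cos t * y = 0 := by
  refine ⟨-(Complex.arg ⟨x, y⟩), ?_⟩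
  have h1 := Complex.norm_mul_cos_arg ⟨x, y⟩
  have h2 := Complex.norm_mul_sin_arg ⟨x, y⟩
  simp only at h1 h2
  rw [Real.sin_neg, Real.cos_neg]
  linear_combination (Real.sin (Complex.arg ⟨x, y⟩)) * h1 - (Real.cos (Complex.arg ⟨x, y⟩)) * h2

/-- Singular value decomposition of a `2 × 2` matrix by proper rotations, the signs being left
in the diagonal entries. -/
theorem exists_rotate (M : Matrix (Fin 2) (Fin 2) ℝ) :
    ∃ (R T : Matrix (Fin 2) (Fin 2) ℝ) (c d : ℝ), R.det = 1 ∧ T.det = 1 ∧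
      R * Rᵀ = 1 ∧ T * Tᵀ = 1 ∧ R * M * Tᵀ = !![c, 0; 0, d] := by
  have hdet : ∀ t : ℝ,
      (!![Real.cos t, -Real.sin t; Real.sin t, Real.cos t] : Matrix (Fin 2) (Fin 2) ℝ).det = 1 := by
    intro t
    rw [Matrix.det_fin_two]
    simp
    linear_combination Real.sin_sq_add_cos_sq t
  have horth : ∀ t : ℝ,
      (!![Real.cos t, -Real.sin t; Real.sin t, Real.cos t] : Matrix (Fin 2) (Fin 2) ℝ) *
        !![Real.cos t, -Real.sin t; Real.sin t, Real.cos t]ᵀ = 1 := by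
    intro t
    have := Real.sin_sq_add_cos_sq t
    ext i j
    fin_cases i <;> fin_cases j <;> simp [Matrix.mul_apply, Fin.sum_univ_two] <;> linarith
  -- As a real-linear map of `ℂ`, `M` is `w ↦ p w + q (conj w)`. Rotations multiply `p` and `q` by the
  -- phases `θ - φ` and `θ + φ`, and the result is diagonal as soon as both are real.
  obtain ⟨ψ, hψ⟩ := exists_angle (M 0 0 + M 1 1) (M 1 0 - M 0 1)
  obtain ⟨χ, hχ⟩ := exists_angle (M 0 0 - M 1 1) (M 1 0 + M 0 1)
  obtain ⟨θ, φ, rfl, rfl⟩ : ∃ θ φ : ℝ, ψ = θ - φ ∧ χ = θ + φ :=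
    ⟨(ψ + χ) / 2, (χ - ψ) / 2, by ring, by ring⟩
  rw [Real.sin_sub, Real.cos_sub] at hψ
  rw [Real.sin_add, Real.cos_add] at hχ
  let N := !![Real.cos θ, -Real.sin θ; Real.sin θ, Real.cos θ] * M *
    !![Real.cos φ, -Real.sin φ; Real.sin φ, Real.cos φ]ᵀ
  refine ⟨_, _, N 0 0, N 1 1, hdet θ, hdet φ, horth θ, horth φ, ?_⟩
  ext i j
  fin_cases i <;> fin_cases j
  · rfl
  · simp [Matrix.mul_apply, Matrix.vecMul, dotProduct, Fin.sum_univ_two]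
    linear_combination (-1 / 2) * hψ + (1 / 2) * hχ
  · simp [Matrix.mul_apply, Matrix.vecMul, dotProduct, Fin.sum_univ_two]
    linear_combination (1 / 2) * hψ + (1 / 2) * hχ
  · rfl

/-- Local symplectic transformations bring `γ` to the standard form
`γ_A = a·1`, `γ_B = b·1`, `ς = diag(c, d)`. -/
theorem exists_normal_form (γ : Matrix ((Fin 1 ⊕ Fin 1) × Fin 2) ((Fin 1 ⊕ Fin 1) × Fin 2) ℝ)
    (hsym : γ.IsSymm) (hunc : Uncertainty γ) :
    ∃ (SA SB : Matrix (Fin 1 × Fin 2) (Fin 1 × Fin 2) ℝ) (a b c d : ℝ), Sp SA ∧ Sp SB ∧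
      mkAB SA 0 0 SB * γ * (mkAB SA 0 0 SB)ᵀ = xp a a b b c d := by
  have hAs : (blkA γ).IsSymm := by ext p q; exact hsym.apply _ _
  have hBs : (blkB γ).IsSymm := by ext p q; exact hsym.apply _ _
  obtain ⟨x, y, z, hA⟩ := exists_up_symm hAs
  obtain ⟨x', y', z', hB⟩ := exists_up_symm hBs
  obtain ⟨p, q, r, s, hC⟩ := exists_up (offAB γ)
  have hAu := hunc.blkA
  have hBu := hunc.blkB
  rw [hA] at hAu
  rw [hB] at hBu
  obtain ⟨hx, -, hg⟩ := uncertainty_up_pos hAu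
  obtain ⟨hx', -, hg'⟩ := uncertainty_up_pos hBu
  obtain ⟨R, a, hR, hRa⟩ := exists_scale hx hg
  obtain ⟨T, b, hT, hTb⟩ := exists_scale hx' hg'
  obtain ⟨R', T', c, d, hR', hT', hRo, hTo, hcd⟩ := exists_rotate (R * !![p, q; r, s] * Tᵀ)
  have hscal : ∀ (O : Matrix (Fin 2) (Fin 2) ℝ) (k : ℝ), O * Oᵀ = 1 →
      O * !![k, 0; 0, k] * Oᵀ = !![k, 0; 0, k] := by
    intro O k hO
    have : (!![k, 0; 0, k] : Matrix (Fin 2) (Fin 2) ℝ) = k • 1 := by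
      ext i j; fin_cases i <;> fin_cases j <;> simp
    rw [this]
    simp [hO]
  refine ⟨up (R' * R), up (T' * T), a, b, c, d, Sp.up (by rw [Matrix.det_mul, hR, hR', one_mul]),
    Sp.up (by rw [Matrix.det_mul, hT, hT', one_mul]), ?_⟩
  rw [directSum_congr _ _ hsym, hA, hB, hC]
  simp only [up_transpose, up_mul, xp]
  have e1 : R' * R * !![x, y; y, z] * (R' * R)ᵀ = !![a, 0; 0, a] := by
    rw [← hscal R' a hRo, ← hRa]
    simp only [Matrix.transpose_mul, Matrix.mul_assoc]
  have e2 : T' * T * !![x', y'; y', z'] * (T' * T)ᵀ = !![b, 0; 0, b] := by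
    rw [← hscal T' b hTo, ← hTb]
    simp only [Matrix.transpose_mul, Matrix.mul_assoc]
  have e3 : R' * R * !![p, q; r, s] * (T' * T)ᵀ = !![c, 0; 0, d] := by
    rw [← hcd]
    simp only [Matrix.transpose_mul, Matrix.mul_assoc]
  rw [e1, e2, e3]

/-! ### The inequality in standard form -/

section normal
variable {a b c d : ℝ}

theorem xp_pos (h : Uncertainty (xp a a b b c d)) :
    0 < a ∧ 0 < b ∧ 0 < a * b - c ^ 2 ∧ 0 < a * b - d ^ 2 := by
  have hA : 0 < a := (uncertainty_up_pos (y := 0) h.blkA).1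
  have hB : 0 < b := (uncertainty_up_pos (y := 0) h.blkB).1
  rw [uncertainty_xp] at h
  -- The position vector `(b, -c)` minimises the position form over its second entry, with value
  -- `b (a b - c²)`; the momentum entry `b / a` makes the uncertainty bound strictly positive.
  have h1 := h b (-c) (b / a) 0
  have h2 := h (b / a) 0 b (-d)
  have e : a * (b / a) ^ 2 = b * (b / a) := by field_simp
  have hp : 0 < b * (b / a) := by positivity
  refine ⟨hA, hB, ?_, ?_⟩
  · refine pos_of_mul_pos_right (a := b) ?_ hB.le
    nlinarith
  · refine pos_of_mul_pos_right (a := b) ?_ hB.le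
    nlinarith

/-- The determinant of the conditional covariance matrix of `A` after measuring `B` with seed
`Γ = [[x, y], [y, z]]`. -/
theorem conditional_det {x y z : ℝ} (hδ : (b + x) * (b + z) - y ^ 2 ≠ 0) :
    (up !![a, 0; 0, a] - up !![c, 0; 0, d] * (up !![b, 0; 0, b] + up !![x, y; y, z])⁻¹ *
      (up !![c, 0; 0, d])ᵀ).det =
      a ^ 2 - (a * (c ^ 2 * (b + z) + d ^ 2 * (b + x)) - c ^ 2 * d ^ 2) /
        ((b + x) * (b + z) - y ^ 2) := by
  obtain ⟨D, hD⟩ : ∃ D, D = (b + x) * (b + z) - y ^ 2 := ⟨_, rfl⟩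
  rw [← hD] at hδ ⊢
  have hy : y ^ 2 = (b + x) * (b + z) - D := by rw [hD]; ring
  have hinv : (!![b, 0; 0, b] + !![x, y; y, z])⁻¹ =
      !![(b + z) / D, -y / D; -y / D, (b + x) / D] := by
    refine Matrix.inv_eq_right_inv ?_
    ext i j
    fin_cases i <;> fin_cases j <;> simp [Matrix.mul_apply, Fin.sum_univ_two] <;> field_simp <;>
      rw [hD] <;> ring
  rw [up_add, up_inv, up_transpose, up_mul, up_mul, up_sub, det_up, hinv, Matrix.det_fin_two]
  simp [Matrix.vecMul, dotProduct, Fin.sum_univ_two]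
  field_simp
  linear_combination (-c ^ 2 * d ^ 2) * hy

/-- The seeds `diag(t, 1/t)` tend to homodyne detection of the position of `B` as `t → 0⁺`, and
their values tend to the left-hand side. -/
theorem J2_xp (h : Uncertainty (xp a a b b c d)) :
    1 / 2 * Real.log (a * b / (a * b - c ^ 2)) ≤ J2 (xp a a b b c d) := by
  obtain ⟨ha, hb, hc, hd⟩ := xp_pos h
  have hdetA : (up !![a, 0; 0, a]).det = a ^ 2 := by
    rw [det_up, Matrix.det_fin_two]; simp; ring
  -- `sSup` is meaningful only for a bounded set. Here `(γ_B + Γ)⁻¹ ≤ γ_B⁻¹`, so the conditional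
  -- determinant is at least the one obtained for `Γ = 0`, which is positive.
  have hbdd : BddAbove (J2Set (xp a a b b c d)) := by
    refine ⟨1 / 2 * Real.log (a ^ 2 / ((a * b - c ^ 2) * (a * b - d ^ 2) / b ^ 2)), ?_⟩
    rintro _ ⟨Γ, hΓ, hΓu, rfl⟩
    obtain ⟨x, y, z, rfl⟩ := exists_up_symm hΓ
    obtain ⟨hx, hz, hg⟩ := uncertainty_up_pos hΓu
    have hδ : 0 < (b + x) * (b + z) - y ^ 2 := by nlinarith [mul_pos hb hb, mul_pos hb hx, mul_pos hb hz]
    simp only [xp, blkA_mkAB, blkB_mkAB, offAB_mkAB]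
    rw [conditional_det hδ.ne', hdetA]
    have hK : 0 < (a * b - c ^ 2) * (a * b - d ^ 2) / b ^ 2 := by positivity
    have hle : (a * b - c ^ 2) * (a * b - d ^ 2) / b ^ 2 ≤
        a ^ 2 - (a * (c ^ 2 * (b + z) + d ^ 2 * (b + x)) - c ^ 2 * d ^ 2) /
        ((b + x) * (b + z) - y ^ 2) := by
      rw [← sub_nonneg]
      have hg0 : 0 ≤ x * z - y ^ 2 := by linarith
      -- The difference is an explicit sum of nonnegative terms.
      have : a ^ 2 - (a * (c ^ 2 * (b + z) + d ^ 2 * (b + x)) - c ^ 2 * d ^ 2) /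
          ((b + x) * (b + z) - y ^ 2) - (a * b - c ^ 2) * (a * b - d ^ 2) / b ^ 2 =
          (c ^ 2 * (a * b - d ^ 2) * (b * x + (x * z - y ^ 2)) +
            d ^ 2 * (a * b - c ^ 2) * (b * z + (x * z - y ^ 2)) +
            c ^ 2 * d ^ 2 * (x * z - y ^ 2)) / (b ^ 2 * ((b + x) * (b + z) - y ^ 2)) := by
        obtain ⟨D, hD⟩ : ∃ D, D = (b + x) * (b + z) - y ^ 2 := ⟨_, rfl⟩
        have hy : y ^ 2 = (b + x) * (b + z) - D := by rw [hD]; ring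
        rw [← hD] at hδ ⊢
        field_simp
        rw [hy]
        ring
      rw [this]
      positivity
    have := hK.trans_le hle
    gcongr
  have hval : ∀ t : ℝ, 0 < t → 1 / 2 * Real.log (a ^ 2 /
      ((a - c ^ 2 / (b + t)) * (a - d ^ 2 * t / (b * t + 1)))) ≤ J2 (xp a a b b c d) := by
    intro t ht
    refine le_csSup hbdd ⟨up !![t, 0; 0, 1 / t], isSymm_up _ _ _, ?_, ?_⟩
    · rw [uncertainty_up]
      intro u₁ u₂ v₁ v₂
      have e : t * u₁ ^ 2 + 2 * 0 * u₁ * u₂ + 1 / t * u₂ ^ 2 +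
          (t * v₁ ^ 2 + 2 * 0 * v₁ * v₂ + 1 / t * v₂ ^ 2) - 2 * (u₁ * v₂ - u₂ * v₁) =
          ((t * u₁ - v₂) ^ 2 + (t * v₁ + u₂) ^ 2) / t := by
        field_simp
        ring
      rw [← sub_nonneg, e]
      positivity
    · have hδ : (b + t) * (b + 1 / t) - 0 ^ 2 ≠ 0 := by
        have : 0 < (b + t) * (b + 1 / t) := by positivity
        simpa using this.ne'
      simp only [xp, blkA_mkAB, blkB_mkAB, offAB_mkAB]
      rw [conditional_det hδ, hdetA]
      congr 3
      have h1 : b + t ≠ 0 := by positivity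
      have h2 : b * t + 1 ≠ 0 := by positivity
      have h3 : b + 1 / t ≠ 0 := by positivity
      field_simp
      ring
  have hlim : Filter.Tendsto (fun t : ℝ => 1 / 2 * Real.log (a ^ 2 /
      ((a - c ^ 2 / (b + t)) * (a - d ^ 2 * t / (b * t + 1))))) (nhdsWithin 0 (Set.Ioi 0))
      (nhds (1 / 2 * Real.log (a * b / (a * b - c ^ 2)))) := by
    have hv : a - c ^ 2 / b ≠ 0 := by
      have : a - c ^ 2 / b = (a * b - c ^ 2) / b := by field_simp
      rw [this]
      positivity
    have hcont : ContinuousAt (fun t : ℝ => 1 / 2 * Real.log (a ^ 2 /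
        ((a - c ^ 2 / (b + t)) * (a - d ^ 2 * t / (b * t + 1))))) 0 := by
      have h1 : b + 0 ≠ 0 := by simpa using hb.ne'
      have h2 : b * 0 + 1 ≠ 0 := by simp
      have h3 : (a - c ^ 2 / (b + 0)) * (a - d ^ 2 * 0 / (b * 0 + 1)) ≠ 0 := by
        simpa using ⟨hv, ha.ne'⟩
      refine ContinuousAt.mul continuousAt_const (ContinuousAt.log ?_ ?_)
      · fun_prop (disch := assumption)
      · exact div_ne_zero (by positivity) h3
    have := hcont.tendsto
    have e : a ^ 2 / ((a - c ^ 2 / (b + 0)) * (a - d ^ 2 * 0 / (b * 0 + 1))) =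
        a * b / (a * b - c ^ 2) := by
      simp only [mul_zero, zero_add, add_zero, zero_div, sub_zero]
      have : a - c ^ 2 / b = (a * b - c ^ 2) / b := by field_simp
      rw [this]
      field_simp
    rw [e] at this
    exact this.mono_left nhdsWithin_le_nhds
  exact le_of_tendsto hlim (Filter.eventually_of_mem self_mem_nhdsWithin fun t ht => hval t ht)

/-- The pure matrix `σ = Q ⊕ Q⁻¹`, with `Q` the position block of the standard form, lies below
it and has `det σ_A = a b / (a b - c²)`. -/
theorem E2_xp (h : Uncertainty (xp a a b b c d)) :
    E2 (xp a a b b c d) ≤ 1 / 2 * Real.log (a * b / (a * b - c ^ 2)) := by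
  obtain ⟨ha, hb, hc, hd⟩ := xp_pos h
  have hbdd : BddBelow (E2Set (xp a a b b c d)) := by
    refine ⟨0, ?_⟩
    rintro _ ⟨σ, hσ, hσu, -, -, rfl⟩
    have hs : (blkA σ).IsSymm := by ext p q; exact hσ.apply _ _
    have hu := hσu.blkA
    obtain ⟨x, y, z, hxyz⟩ := exists_up_symm hs
    rw [hxyz] at hu ⊢
    have := (uncertainty_up_pos hu).2.2
    have h1 : 1 ≤ (up !![x, y; y, z]).det := by
      rw [det_up, Matrix.det_fin_two]
      simp
      linarith
    have := Real.log_nonneg h1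
    positivity
  refine csInf_le hbdd ⟨xp a (b / (a * b - c ^ 2)) b (a / (a * b - c ^ 2)) c (-c / (a * b - c ^ 2)),
    isSymm_xp _ _ _ _ _ _, ?_, det_xp_pure ha hb hc, ?_, ?_⟩
  · rw [uncertainty_xp]
    intro x y z w
    -- `Q(r) + Q⁻¹(s) - 2 r·s = Q⁻¹(Q r - s)`, written as a sum of squares.
    have e : a * x ^ 2 + 2 * c * x * y + b * y ^ 2 + (b / (a * b - c ^ 2) * z ^ 2 +
        2 * (-c / (a * b - c ^ 2)) * z * w + a / (a * b - c ^ 2) * w ^ 2) - 2 * (x * z + y * w) =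
        ((a * x + c * y - z) ^ 2 +
          ((a * b - c ^ 2) * y - (a * w - c * z)) ^ 2 / (a * b - c ^ 2)) / a := by
      field_simp
      ring
    rw [← sub_nonneg, e]
    positivity
  · have e : xp a a b b c d -
        xp a (b / (a * b - c ^ 2)) b (a / (a * b - c ^ 2)) c (-c / (a * b - c ^ 2)) =
        xp 0 (a - b / (a * b - c ^ 2)) 0 (b - a / (a * b - c ^ 2)) 0 (d - -c / (a * b - c ^ 2)) := by
      ext ⟨p, i⟩ ⟨q, j⟩
      rcases p with p | p <;> rcases q with q | q <;> fin_cases p <;> fin_cases q <;>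
        fin_cases i <;> fin_cases j <;> simp [xp, mkAB, up, Equiv.sumProdDistrib]
    rw [e]
    refine posSemidef_xp (fun x y => by simp) fun z w => ?_
    -- Testing the uncertainty relation at the position vector `Q⁻¹ (z, w)` gives `P ≥ Q⁻¹` for the
    -- momentum block `P`.
    have h1 := uncertainty_xp.1 h ((b * z - c * w) / (a * b - c ^ 2))
      ((a * w - c * z) / (a * b - c ^ 2)) z w
    rw [← sub_nonneg] at h1
    convert h1 using 1
    field_simp
    ring
  · simp only [xp, blkA_mkAB]
    rw [det_up, Matrix.det_fin_two]
    simp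
    congr 1
    ring

end normal

/-- **Classical correlations exceed entanglement (two-mode Gaussian states,
Rényi-2).**  For any two-mode covariance matrix `γ_{AB}` (real symmetric with
`γ + iΩ ⪰ 0`, `A` and `B` single modes), the Gaussian Rényi-2 one-way
classical correlations dominate the Gaussian Rényi-2 entanglement:
`J₂(γ_{A|B}) ≥ E₂(γ_{A:B})`. -/
theorem renyi2_classical_ge_entanglement
    (γ : Matrix ((Fin 1 ⊕ Fin 1) × Fin 2) ((Fin 1 ⊕ Fin 1) × Fin 2) ℝ)
    (hsym : γ.IsSymm) (hunc : Uncertainty γ) :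
    E2 γ ≤ J2 γ := by

  obtain ⟨SA, SB, a, b, c, d, hA, hB, h⟩ := exists_normal_form γ hsym hunc
  have hu := (hA.directSum hB).uncertainty hunc
  rw [← E2_congr hA hB, ← J2_congr hA hB hsym]
  rw [h] at hu ⊢
  exact (E2_xp hu).trans (J2_xp hu)
end

section
/- Let a₁, a₂, a₃ be real numbers, each ≥ 1, such that for every permutation (i,j,k) of (1,2,3) one has |a_i − a_j| + 1 < a_k < √(a_i² + a_j² − 1) (the condition of full inseparability of a pure three-mode Gaussian state). Then for every permutation (i,j,k) of (1,2,3), a_k > α_k, where α_k = √( [ 2(a_i² + a_j²) + (a_i² − a_j²)² + |a_i² − a_j²|·√( (a_i² − a_j²)² + 8(a_i² + a_j²) ) ] / ( 2(a_i² + a_j²) ) ). -/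
/-!
Write `x = a i`, `y = a j`, `s = x² + y²` and `D = |x² - y²|`. The upper bounds on `a i` and `a j`,
that is `x² < y² + (a k)² - 1` and `y² < x² + (a k)² - 1`, say that `1 + D < (a k)²`.
On the other hand `α_k² = 1 + D * (D + √(D² + 8 s)) / (2 s) ≤ 1 + D`, because
`√(D² + 8 s) ≤ 2 s - D` reduces after squaring to `D + 2 ≤ s`, which is `min x² y² ≥ 1`.
Hence `α_k² ≤ 1 + D < (a k)²`.
-/


/-- **Fully inseparable pure three-mode Gaussian states lie above all the
thresholds `α_k`.**  If `a₁, a₂, a₃ ≥ 1` satisfy, for every permutation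
`(i,j,k)` of `(1,2,3)`, the full-inseparability conditions
`|a_i − a_j| + 1 < a_k < √(a_i² + a_j² − 1)`, then for every permutation
`(i,j,k)` one has `a_k > α_k`, where
`α_k = √( [2(a_i²+a_j²) + (a_i²−a_j²)² + |a_i²−a_j²|√((a_i²−a_j²)²+8(a_i²+a_j²))] / (2(a_i²+a_j²)) )`. -/
theorem fully_inseparable_exceeds_threshold (a : Fin 3 → ℝ)
    (h1 : ∀ i, 1 ≤ a i)
    (hins : ∀ i j k : Fin 3, i ≠ j → j ≠ k → i ≠ k →
      |a i - a j| + 1 < a k ∧ a k < Real.sqrt ((a i)^2 + (a j)^2 - 1)) :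
    ∀ i j k : Fin 3, i ≠ j → j ≠ k → i ≠ k →
      Real.sqrt ((2*((a i)^2 + (a j)^2) + ((a i)^2 - (a j)^2)^2
          + |(a i)^2 - (a j)^2|
            * Real.sqrt (((a i)^2 - (a j)^2)^2 + 8*((a i)^2 + (a j)^2)))
        / (2*((a i)^2 + (a j)^2))) < a k := by
  intro i j k hij hjk hik
  have hi := h1 i
  have hj := h1 j
  have hk := h1 k
  have hx : (a i)^2 < (a j)^2 + (a k)^2 - 1 :=
    (Real.lt_sqrt (by linarith)).1 (hins j k i hjk hik.symm hij.symm).2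
  have hy : (a j)^2 < (a i)^2 + (a k)^2 - 1 :=
    (Real.lt_sqrt (by linarith)).1 (hins i k j hik hjk.symm hij).2
  have hx1 : 1 ≤ (a i)^2 := one_le_pow₀ hi
  have hy1 : 1 ≤ (a j)^2 := one_le_pow₀ hj
  rw [Real.sqrt_lt' (by linarith), ← sq_abs ((a i)^2 - (a j)^2)]
  have hD : |(a i)^2 - (a j)^2| + 1 < (a k)^2 := by
    have : |(a i)^2 - (a j)^2| < (a k)^2 - 1 := abs_lt.2 ⟨by linarith, by linarith⟩
    linarith
  have hDs : |(a i)^2 - (a j)^2| ≤ (a i)^2 + (a j)^2 - 2 :=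
    abs_le.2 ⟨by linarith, by linarith⟩
  have hD0 := abs_nonneg ((a i)^2 - (a j)^2)
  have hs : 2 ≤ (a i)^2 + (a j)^2 := by linarith
  generalize |(a i)^2 - (a j)^2| = D at *
  generalize (a i)^2 + (a j)^2 = s at *
  have hroot : Real.sqrt (D^2 + 8*s) ≤ 2*s - D :=
    Real.sqrt_le_iff.2 ⟨by linarith, by nlinarith⟩
  refine lt_of_le_of_lt ?_ hD
  rw [div_le_iff₀ (by linarith)]
  nlinarith [mul_le_mul_of_nonneg_left hroot hD0]
end

section
/- Let a₁, a₂, a₃ ≥ 1 satisfy, for every permutation (i,j,k) of (1,2,3), the full-inseparability conditions |a_i − a_j| + 1 < a_k < √(a_i² + a_j² − 1). Define δ = ∏_{μ,ν ∈ {0,1}} ( (a₁ + (−1)^μ a₂ + (−1)^ν a₃)² − 1 ), β = −1 + 2a₁² + 2a₂² + 2a₃² + 2a₁²a₂² + 2a₁²a₃² + 2a₂²a₃² − a₁⁴ − a₂⁴ − a₃⁴ − √δ, and for each k let g_k = 1 if a_k ≥ √(a_i² + a_j² − 1); g_k = β/(8a_k²) if α_k < a_k < √(a_i² + a_j² − 1);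 g_k = ((a_i² − a_j²)/(a_k² − 1))² if a_k ≤ α_k, where α_k = √( [2(a_i²+a_j²) + (a_i²−a_j²)² + |a_i²−a_j²|√((a_i²−a_j²)²+8(a_i²+a_j²))] / (2(a_i²+a_j²)) ). Then g_k = β/(8a_k²) for all k, and the residual quantity (1/2) ln( a_i² / (g_j g_k) ) equals (1/2) ln( 64 a₁² a₂² a₃² / β² ) for every choice of focus index i; in particular it is invariant under permutations of the modes. -/
/-!
The inequalities `a_i² < a_j² + a_k² - 1` and `a_j² < a_i² + a_k² - 1`, the upper inseparability
bounds for the other two modes, say that `a_k² > 1 + |a_i² - a_j²|`. On the other hand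
`α_k² ≤ 1 + |a_i² - a_j²|` whenever `a_i, a_j ≥ 1` (`alphaThr_le`), so `a_k > α_k`; with
`a_k < √(a_i² + a_j² - 1)` this puts every pair of modes in the middle branch (`gEnt_eq`).
Since every `g_k` involves the same `β`, the residual entanglement then reduces to an expression
symmetric in `a₁, a₂, a₃`.
-/

/-- The threshold `α` separating the branches of the closed formula for the
two-mode Gaussian Rényi-2 entanglement, as a function of the two marginal
symplectic parameters `x = a_i`, `y = a_j`. -/
noncomputable def alphaThr (x y : ℝ) : ℝ :=
  Real.sqrt ((2*(x^2 + y^2) + (x^2 - y^2)^2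
    + |x^2 - y^2| * Real.sqrt ((x^2 - y^2)^2 + 8*(x^2 + y^2))) / (2*(x^2 + y^2)))

/-- `δ = ∏_{μ,ν ∈ {0,1}} ((a₁ + (−1)^μ a₂ + (−1)^ν a₃)² − 1)`. -/
noncomputable def deltaP (a : Fin 3 → ℝ) : ℝ :=
  ((a 0 + a 1 + a 2)^2 - 1) * ((a 0 + a 1 - a 2)^2 - 1) *
    ((a 0 - a 1 + a 2)^2 - 1) * ((a 0 - a 1 - a 2)^2 - 1)

/-- `β = −1 + 2a₁² + 2a₂² + 2a₃² + 2a₁²a₂² + 2a₁²a₃² + 2a₂²a₃²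
      − a₁⁴ − a₂⁴ − a₃⁴ − √δ`. -/
noncomputable def betaP (a : Fin 3 → ℝ) : ℝ :=
  -1 + 2*(a 0)^2 + 2*(a 1)^2 + 2*(a 2)^2
    + 2*(a 0)^2*(a 1)^2 + 2*(a 0)^2*(a 2)^2 + 2*(a 1)^2*(a 2)^2
    - (a 0)^4 - (a 1)^4 - (a 2)^4 - Real.sqrt (deltaP a)

/-- The closed-form value `g_k = exp(2 E₂)` of the Gaussian Rényi-2
entanglement of the reduced two-mode state of modes `i` and `j` of a pure
three-mode Gaussian state with marginal symplectic parameters `a`: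
`g_k = 1` if `a_k ≥ √(a_i² + a_j² − 1)`;
`g_k = ((a_i² − a_j²)/(a_k² − 1))²` if `a_k ≤ α_k`;
`g_k = β/(8 a_k²)` otherwise (i.e. if `α_k < a_k < √(a_i² + a_j² − 1)`). -/
noncomputable def gEnt (a : Fin 3 → ℝ) (i j k : Fin 3) : ℝ :=
  if Real.sqrt ((a i)^2 + (a j)^2 - 1) ≤ a k then 1
  else if a k ≤ alphaThr (a i) (a j) then (((a i)^2 - (a j)^2) / ((a k)^2 - 1))^2
  else betaP a / (8*(a k)^2)

/-- With `D = |x² - y²|` and `S = x² + y²`, the bound amounts to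
`D + √(D² + 8S) ≤ 2S`, that is to `2 ≤ S - D = 2 min(x², y²)`. -/
lemma alphaThr_le {x y : ℝ} (hx : 1 ≤ x) (hy : 1 ≤ y) :
    alphaThr x y ≤ Real.sqrt (1 + |x^2 - y^2|) := by
  unfold alphaThr
  apply Real.sqrt_le_sqrt
  have hx2 : 1 ≤ x^2 := one_le_pow₀ hx
  have hy2 : 1 ≤ y^2 := one_le_pow₀ hy
  rw [← sq_abs (x^2 - y^2)]
  have hSD : 2 ≤ x^2 + y^2 - |x^2 - y^2| := by
    rcases abs_cases (x^2 - y^2) with h | h <;> linarith [h.1]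
  have hD : 0 ≤ |x^2 - y^2| := abs_nonneg _
  generalize |x^2 - y^2| = D at *
  have hS : 0 < x^2 + y^2 := by linarith
  generalize x^2 + y^2 = S at *
  have hr : Real.sqrt (D^2 + 8*S) ≤ 2*S - D := by
    rw [Real.sqrt_le_left (by linarith)]
    nlinarith
  rw [div_le_iff₀ (by linarith)]
  nlinarith [mul_le_mul_of_nonneg_left hr hD]

lemma gEnt_eq {a : Fin 3 → ℝ} (h1 : ∀ i, 1 ≤ a i)
    (hins : ∀ i j k : Fin 3, i ≠ j → j ≠ k → i ≠ k →
      |a i - a j| + 1 < a k ∧ a k < Real.sqrt ((a i)^2 + (a j)^2 - 1))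
    {i j k : Fin 3} (hij : i ≠ j) (hjk : j ≠ k) (hik : i ≠ k) :
    gEnt a i j k = betaP a / (8*(a k)^2) := by
  have pos : ∀ i, 0 ≤ a i := fun i => zero_le_one.trans (h1 i)
  have hk := (hins i j k hij hjk hik).2
  have hi := (Real.lt_sqrt (pos i)).1 (hins j k i hjk hik.symm hij.symm).2
  have hj := (Real.lt_sqrt (pos j)).1 (hins i k j hik hjk.symm hij).2
  have hD : 1 + |(a i)^2 - (a j)^2| < (a k)^2 := by
    rcases abs_cases ((a i)^2 - (a j)^2) with h | h <;> linarith [h.1]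
  have hα : alphaThr (a i) (a j) < a k :=
    (alphaThr_le (h1 i) (h1 j)).trans_lt ((Real.sqrt_lt' (by linarith [h1 k])).2 hD)
  rw [gEnt, if_neg (not_le.2 hk), if_neg (not_le.2 hα)]

/-- **Permutation invariance of the residual Gaussian Rényi-2 entanglement.**
For a pure three-mode Gaussian state with marginal symplectic parameters
`a₁, a₂, a₃ ≥ 1` satisfying full inseparability,
`|a_i − a_j| + 1 < a_k < √(a_i² + a_j² − 1)` for all permutations `(i,j,k)`,
the two-mode entanglements all fall in the middle branch,
`g_k = β/(8 a_k²)`, and the residual entanglement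
`(1/2) ln (a_i² / (g_j g_k))` equals `(1/2) ln (64 a₁² a₂² a₃² / β²)`
for every focus mode `i`: it is invariant under mode permutations. -/
theorem residual_renyi2_entanglement_invariant (a : Fin 3 → ℝ)
    (h1 : ∀ i, 1 ≤ a i)
    (hins : ∀ i j k : Fin 3, i ≠ j → j ≠ k → i ≠ k →
      |a i - a j| + 1 < a k ∧ a k < Real.sqrt ((a i)^2 + (a j)^2 - 1)) :
    (∀ i j k : Fin 3, i ≠ j → j ≠ k → i ≠ k →
      gEnt a i j k = betaP a / (8*(a k)^2)) ∧
    (∀ i j k : Fin 3, i ≠ j → j ≠ k → i ≠ k →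
      (1/2) * Real.log ((a i)^2 / (gEnt a i j k * gEnt a i k j)) =
        (1/2) * Real.log (64*(a 0)^2*(a 1)^2*(a 2)^2 / (betaP a)^2)) := by
  refine ⟨fun i j k hij hjk hik => gEnt_eq h1 hins hij hjk hik, fun i j k hij hjk hik => ?_⟩
  rw [gEnt_eq h1 hins hij hjk hik, gEnt_eq h1 hins hik hjk.symm hij]
  have hprod : (a 0)^2 * (a 1)^2 * (a 2)^2 = (a i)^2 * (a j)^2 * (a k)^2 := by
    fin_cases i <;> fin_cases j <;> fin_cases k <;>
      first
      | (simp at hij hjk hik; done)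
      | (dsimp <;> ring)
  have h : 64*(a 0)^2*(a 1)^2*(a 2)^2 = 64*((a i)^2 * (a j)^2 * (a k)^2) := by
    rw [← hprod]; ring
  -- No case distinction on `β = 0` is needed: both fractions are then `0` by convention.
  rw [h, div_mul_div_comm, div_div_eq_mul_div]
  congr 3 <;> ring
end
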